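/- arXiv:1311.7343 — 3 statements merged into one kernel-verified Lean document; each statement's English description precedes it below -/
import Mathlib

section
/- (Real Demailly–Skoda) Let g be a metric on ℝⁿ with values in ℂ^{r×r}. If g is log concave in the sense of Griffiths, then the metric g·det g is log concave in the sense of Nakano. -/
open scoped ComplexOrder
open Matrix MeasureTheory

section Preamble

variable {ι : Type*} [Fintype ι] [DecidableEq ι] {r : ℕ}

/-- Partial derivative of a complex-valued function on `ι → ℝ` in direction `j`. -/
noncomputable def pdC (j : ι) (f : (ι → ℝ) → ℂ) (x : ι → ℝ) : ℂ :=
  fderiv ℝ f x (Pi.single j 1)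

/-- Partial derivative of a real-valued function on `ι → ℝ` in direction `j`. -/
noncomputable def pdR (j : ι) (f : (ι → ℝ) → ℝ) (x : ι → ℝ) : ℝ :=
  fderiv ℝ f x (Pi.single j 1)

/-- Entrywise partial derivative of a matrix-valued function. -/
noncomputable def mpd (j : ι) (g : (ι → ℝ) → Matrix (Fin r) (Fin r) ℂ) (x : ι → ℝ) :
    Matrix (Fin r) (Fin r) ℂ :=
  Matrix.of fun a b => pdC j (fun y => g y a b) x

/-- The curvature-type quantity `Θ_{jk} = ∂_{x_k}(g⁻¹ ∂_{x_j} g)`. -/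
noncomputable def Theta (g : (ι → ℝ) → Matrix (Fin r) (Fin r) ℂ) (j k : ι) (x : ι → ℝ) :
    Matrix (Fin r) (Fin r) ℂ :=
  mpd k (fun y => (g y)⁻¹ * mpd j g y) x

/-- The pairing `(u, v)_g = v* g u`. -/
noncomputable def ip (g : Matrix (Fin r) (Fin r) ℂ) (u v : Fin r → ℂ) : ℂ :=
  star v ⬝ᵥ g.mulVec u

/-- A metric: twice differentiable entries, Hermitian positive definite values. -/
def IsMetric (g : (ι → ℝ) → Matrix (Fin r) (Fin r) ℂ) : Prop :=
  (∀ x, (g x).PosDef) ∧ ∀ a b, ContDiff ℝ 2 fun x => g x a b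

/-- Log concavity in the sense of Nakano. -/
def NakanoLogConcave (g : (ι → ℝ) → Matrix (Fin r) (Fin r) ℂ) : Prop :=
  ∀ (x : ι → ℝ) (u : ι → Fin r → ℂ),
    ∑ j, ∑ k, ip (g x) ((Theta g j k x).mulVec (u j)) (u k) ≤ 0

/-- Log concavity in the sense of Griffiths. -/
def GriffithsLogConcave (g : (ι → ℝ) → Matrix (Fin r) (Fin r) ℂ) : Prop :=
  ∀ (x : ι → ℝ) (u : Fin r → ℂ) (v : ι → ℂ),
    ∑ j, ∑ k, ip (g x) ((Theta g j k x).mulVec u) u * (v j * star (v k)) ≤ 0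

end Preamble

/-!
Jacobi's formula makes the connection matrix of `g · det g` that of `g` plus its trace times the
identity, so `Θ^{g · det g} = Θ^g + tr Θ^g`. Writing `g = B* B` and replacing `Θ` by `B Θ B⁻¹`
reduces the claim to `g = 1`: if `H` is Griffiths nonpositive, then `H + tr H` is Nakano
nonpositive.

For each vector `z`, Griffiths nonpositivity with `w = z` and `v j = z* u j` says that the family
`(z* H j k z) z z*` is Nakano nonpositive. Families of this kind generate a cone. Averaging over
`z` with independent entries, each a uniformly random cube root of unity, puts
`H + tr H - diag H` in it, and summing over the standard basis vectors puts `diag H` in it.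
-/

section Forms

variable {ι κ : Type*} [Fintype ι] [Fintype κ] {H : ι → ι → Matrix κ κ ℂ}

/-- Griffiths nonpositivity of a family `H j k` of matrices of sesquilinear forms: the associated
form on `ℂ^ι ⊗ ℂ^κ` is nonpositive on decomposable tensors `v ⊗ w`. A metric `g` enters through
`H j k = g * Θ j k`. -/
def GriffithsNonpos (H : ι → ι → Matrix κ κ ℂ) : Prop :=
  ∀ (w : κ → ℂ) (v : ι → ℂ), ∑ j, ∑ k, (star w ⬝ᵥ H j k *ᵥ w) * (v j * star (v k)) ≤ 0

/-- Nakano nonpositivity of a family `H j k` of matrices of sesquilinear forms: the associated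
form on `ℂ^ι ⊗ ℂ^κ` is nonpositive on all tensors. A metric `g` enters through
`H j k = g * Θ j k`. -/
def NakanoNonpos (H : ι → ι → Matrix κ κ ℂ) : Prop :=
  ∀ u : ι → κ → ℂ, ∑ j, ∑ k, star (u k) ⬝ᵥ H j k *ᵥ u j ≤ 0

theorem star_dotProduct_conjTranspose_mul_mul_mulVec (A C : Matrix κ κ ℂ) (v w : κ → ℂ) :
    star v ⬝ᵥ (Cᴴ * A * C) *ᵥ w = star (C *ᵥ v) ⬝ᵥ A *ᵥ (C *ᵥ w) := by
  rw [star_mulVec, ← dotProduct_mulVec, mulVec_mulVec, mulVec_mulVec, Matrix.mul_assoc]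

namespace NakanoNonpos

theorem add {H' : ι → ι → Matrix κ κ ℂ} (hH : NakanoNonpos H) (hH' : NakanoNonpos H') :
    NakanoNonpos fun j k => H j k + H' j k := fun u => by
  simpa only [add_mulVec, dotProduct_add, Finset.sum_add_distrib]
    using add_nonpos (hH u) (hH' u)

theorem sum {τ : Type*} [Fintype τ] {F : τ → ι → ι → Matrix κ κ ℂ}
    (hF : ∀ t, NakanoNonpos (F t)) : NakanoNonpos fun j k => ∑ t, F t j k := fun u => by
  have swap : ∑ j, ∑ k, star (u k) ⬝ᵥ (∑ t, F t j k) *ᵥ u j =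
      ∑ t, ∑ j, ∑ k, star (u k) ⬝ᵥ F t j k *ᵥ u j := by
    simp only [sum_mulVec, dotProduct_sum]
    exact (Finset.sum_congr rfl fun j _ => Finset.sum_comm).trans Finset.sum_comm
  exact swap.trans_le (Finset.sum_nonpos fun t _ => hF t u)

theorem smul (hH : NakanoNonpos H) {c : ℂ} (hc : 0 ≤ c) :
    NakanoNonpos fun j k => c • H j k := fun u => by
  simpa only [smul_mulVec, dotProduct_smul, smul_eq_mul, Finset.mul_sum]
    using mul_nonpos_of_nonneg_of_nonpos hc (hH u)

theorem conjTranspose_mul_mul (hH : NakanoNonpos H) (C : Matrix κ κ ℂ) :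
    NakanoNonpos fun j k => Cᴴ * H j k * C := fun u => by
  simpa only [star_dotProduct_conjTranspose_mul_mul_mulVec] using hH fun j => C *ᵥ u j

end NakanoNonpos

theorem GriffithsNonpos.conjTranspose_mul_mul (hH : GriffithsNonpos H) (C : Matrix κ κ ℂ) :
    GriffithsNonpos fun j k => Cᴴ * H j k * C := fun w v => by
  simpa only [star_dotProduct_conjTranspose_mul_mul_mulVec] using hH (C *ᵥ w) v

theorem GriffithsNonpos.nakanoNonpos_smul_vecMulVec (hH : GriffithsNonpos H) (z : κ → ℂ) :
    NakanoNonpos fun j k => (star z ⬝ᵥ H j k *ᵥ z) • vecMulVec z (star z) := fun u => by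
  have rank_one (j k : ι) : star (u k) ⬝ᵥ vecMulVec z (star z) *ᵥ u j =
      (star z ⬝ᵥ u j) * star (star z ⬝ᵥ u k) := by
    rw [vecMulVec_mulVec, op_smul_eq_smul, dotProduct_smul, smul_eq_mul, ← star_dotProduct]
  simpa only [smul_mulVec, dotProduct_smul, smul_eq_mul, rank_one] using hH z fun j => star z ⬝ᵥ u j

end Forms

section PhaseAveraging

variable {κ : Type*}

/-- The vector of cube roots of unity with exponents `σ`. As `σ` ranges over `κ → ZMod 3`, its
entries behave like independent random phases. Cube roots are used because real signs also satisfy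
`z i ^ 2 = 1`, which would add a transpose to the average `sum_phaseVector_smul_vecMulVec`. -/
noncomputable def phaseVector (σ : κ → ZMod 3) : κ → ℂ := fun i => ZMod.stdAddChar (σ i)

theorem forall_add_eq_add_iff {R : Type*} [Semiring R] [NeZero (2 : R)] {a b c d : κ} :
    (∀ σ : κ → R, σ a + σ b = σ c + σ d) ↔ (a = c ∧ b = d) ∨ (a = d ∧ b = c) := by
  classical
  have : Nontrivial R := ⟨2, 0, two_ne_zero⟩
  constructor
  · intro h
    have singles : (Pi.single a 1 + Pi.single b 1 : κ → R) = Pi.single c 1 + Pi.single d 1 := by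
      ext i
      simpa only [Pi.add_apply, Pi.single_apply, eq_comm] using h (Pi.single i 1)
    simpa [Pi.single_add_single_eq_single_add_single one_ne_zero one_ne_zero,
      one_add_one_eq_two, two_ne_zero] using singles
  · rintro (⟨rfl, rfl⟩ | ⟨rfl, rfl⟩) σ
    · rfl
    · exact add_comm _ _

variable [Fintype κ] [DecidableEq κ]

theorem sum_phaseVector_mul_star_mul_mul_star (a b c d : κ) :
    ∑ σ : κ → ZMod 3, phaseVector σ a * star (phaseVector σ c) *
        (phaseVector σ b * star (phaseVector σ d)) =
      if (a = c ∧ b = d) ∨ (a = d ∧ b = c) then (3 : ℂ) ^ Fintype.card κ else 0 := by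
  let ev (i : κ) : (κ → ZMod 3) →+ ZMod 3 := Pi.evalAddMonoidHom (fun _ => ZMod 3) i
  let ψ : AddChar (κ → ZMod 3) ℂ :=
    ZMod.stdAddChar.compAddMonoidHom (ev a + ev b - (ev c + ev d))
  have ψ_apply (σ : κ → ZMod 3) : phaseVector σ a * star (phaseVector σ c) *
      (phaseVector σ b * star (phaseVector σ d)) = ψ σ := by
    have star_stdAddChar (t : ZMod 3) : star (ZMod.stdAddChar t : ℂ) = ZMod.stdAddChar (-t) :=
      (AddChar.map_neg_eq_conj _ _).symm
    change _ = ZMod.stdAddChar (σ a + σ b - (σ c + σ d))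
    simp only [phaseVector, star_stdAddChar, ← AddChar.map_add_eq_mul]
    congr 1
    ring
  have : NeZero (2 : ZMod 3) := ⟨by decide⟩
  have ψ_eq_zero_iff : ψ = 0 ↔ (a = c ∧ b = d) ∨ (a = d ∧ b = c) := by
    rw [← forall_add_eq_add_iff (R := ZMod 3), DFunLike.ext_iff]
    refine forall_congr' fun σ => ?_
    change ZMod.stdAddChar (σ a + σ b - (σ c + σ d)) = (1 : ℂ) ↔ _
    rw [← AddChar.map_zero_eq_one (ZMod.stdAddChar (N := 3)),
      ZMod.injective_stdAddChar.eq_iff, sub_eq_zero]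
  simp only [ψ_apply, AddChar.sum_eq_ite, ψ_eq_zero_iff, Fintype.card_fun, ZMod.card,
    Nat.cast_pow, Nat.cast_ofNat]

theorem sum_phaseVector_smul_vecMulVec (A : Matrix κ κ ℂ) :
    ∑ σ : κ → ZMod 3, (star (phaseVector σ) ⬝ᵥ A *ᵥ phaseVector σ) •
        vecMulVec (phaseVector σ) (star (phaseVector σ)) =
      (3 : ℂ) ^ Fintype.card κ • (A + A.trace • 1 - diagonal A.diag) := by
  ext b d
  have expand (σ : κ → ZMod 3) : (star (phaseVector σ) ⬝ᵥ A *ᵥ phaseVector σ) *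
      (phaseVector σ b * star (phaseVector σ d)) =
      ∑ c, ∑ a, A c a * (phaseVector σ a * star (phaseVector σ c) *
        (phaseVector σ b * star (phaseVector σ d))) := by
    simp only [dotProduct, mulVec, Finset.mul_sum, Finset.sum_mul, Pi.star_apply]
    refine Finset.sum_congr rfl fun c _ => Finset.sum_congr rfl fun a _ => ?_
    ring
  have moments : ∑ σ : κ → ZMod 3, (star (phaseVector σ) ⬝ᵥ A *ᵥ phaseVector σ) *
      (phaseVector σ b * star (phaseVector σ d)) =
      ∑ c, ∑ a, A c a *
        if (a = c ∧ b = d) ∨ (a = d ∧ b = c) then (3 : ℂ) ^ Fintype.card κ else 0 := by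
    simp only [expand, ← sum_phaseVector_mul_star_mul_mul_star, Finset.mul_sum]
    rw [Finset.sum_comm]
    exact Finset.sum_congr rfl fun c _ => Finset.sum_comm
  have inclusion_exclusion (c a : κ) :
      (A c a * if (a = c ∧ b = d) ∨ (a = d ∧ b = c) then (3 : ℂ) ^ Fintype.card κ else 0) =
        (3 : ℂ) ^ Fintype.card κ * ((if a = d then if c = b then A c a else 0 else 0) +
          (if a = c then if b = d then A c a else 0 else 0) -
          (if a = c then if c = b then if b = d then A c a else 0 else 0 else 0)) := by
    by_cases a = c <;> by_cases b = d <;> by_cases a = d <;> by_cases b = c <;> grind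
  simp only [Matrix.sum_apply, Matrix.smul_apply, vecMulVec_apply, Pi.star_apply, smul_eq_mul,
    moments, inclusion_exclusion, ← Finset.mul_sum, Finset.sum_add_distrib,
    Finset.sum_sub_distrib, Finset.sum_ite_eq', Finset.mem_univ, if_true]
  by_cases hbd : b = d <;> simp [hbd, trace]

end PhaseAveraging

section DemaillySkoda

variable {ι κ : Type*} [Fintype ι] [Fintype κ] [DecidableEq κ] {H : ι → ι → Matrix κ κ ℂ}

theorem GriffithsNonpos.nakanoNonpos_diagonal (hH : GriffithsNonpos H) :
    NakanoNonpos fun j k => diagonal (H j k).diag := by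
  have diagonal_eq_sum (A : Matrix κ κ ℂ) : diagonal A.diag =
      ∑ i, (star (Pi.single i 1) ⬝ᵥ A *ᵥ Pi.single i 1) •
        vecMulVec (Pi.single i 1) (star (Pi.single i 1)) := by
    simp [← single_eq_single_vecMulVec_single, ← sum_single_eq_diagonal]
  simpa only [diagonal_eq_sum] using
    NakanoNonpos.sum fun i => hH.nakanoNonpos_smul_vecMulVec (Pi.single i 1)

theorem GriffithsNonpos.nakanoNonpos_add_trace_sub_diagonal (hH : GriffithsNonpos H) :
    NakanoNonpos fun j k => H j k + (H j k).trace • 1 - diagonal (H j k).diag := by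
  have average : NakanoNonpos fun j k =>
      (3 : ℂ) ^ Fintype.card κ • (H j k + (H j k).trace • 1 - diagonal (H j k).diag) := by
    simpa only [sum_phaseVector_smul_vecMulVec] using
      NakanoNonpos.sum fun σ : κ → ZMod 3 => hH.nakanoNonpos_smul_vecMulVec (phaseVector σ)
  have card_pos : (0 : ℂ) < 3 ^ Fintype.card κ := by positivity
  simpa only [inv_smul_smul₀ card_pos.ne'] using average.smul (inv_pos.mpr card_pos).le

theorem GriffithsNonpos.nakanoNonpos_add_trace (hH : GriffithsNonpos H) :
    NakanoNonpos fun j k => H j k + (H j k).trace • 1 := by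
  simpa only [sub_add_cancel] using
    hH.nakanoNonpos_add_trace_sub_diagonal.add hH.nakanoNonpos_diagonal

theorem GriffithsNonpos.nakanoNonpos_mul_add_trace {g : Matrix κ κ ℂ} (hg : g.PosDef)
    {T : ι → ι → Matrix κ κ ℂ} (hT : GriffithsNonpos fun j k => g * T j k) :
    NakanoNonpos fun j k => g * (T j k + (T j k).trace • 1) := by
  obtain ⟨B, hB, rfl⟩ : ∃ B : Matrix κ κ ℂ, IsUnit B ∧ g = Bᴴ * B := by
    open scoped MatrixOrder in
    exact CStarAlgebra.isStrictlyPositive_iff_eq_star_mul_self.mp hg.isStrictlyPositive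
  have hdet : IsUnit B.det := (isUnit_iff_isUnit_det B).mp hB
  have to_unitary_frame (j k : ι) : B⁻¹ᴴ * (Bᴴ * B * T j k) * B⁻¹ = B * T j k * B⁻¹ := by
    rw [Matrix.mul_assoc Bᴴ, ← Matrix.mul_assoc, ← conjTranspose_mul,
      mul_nonsing_inv B hdet, conjTranspose_one, Matrix.one_mul]
  have trace_conj (j k : ι) : (B * T j k * B⁻¹).trace = (T j k).trace := by
    rw [trace_mul_comm, nonsing_inv_mul_cancel_left _ _ hdet]
  have from_unitary_frame (j k : ι) :
      Bᴴ * (B * T j k * B⁻¹ + (T j k).trace • 1) * B =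
        Bᴴ * B * (T j k + (T j k).trace • 1) := by
    simp only [Matrix.mul_add, Matrix.add_mul, Matrix.mul_smul, Matrix.smul_mul, Matrix.mul_one,
      Matrix.mul_assoc, nonsing_inv_mul B hdet]
  have hframe := hT.conjTranspose_mul_mul B⁻¹
  simp only [to_unitary_frame] at hframe
  simpa only [trace_conj, from_unitary_frame] using
    hframe.nakanoNonpos_add_trace.conjTranspose_mul_mul B

end DemaillySkoda

section DeterminantCalculus

variable {𝕜 𝕂 E κ : Type*} [NontriviallyNormedField 𝕜] [NontriviallyNormedField 𝕂]
  [NormedAlgebra 𝕜 𝕂] [NormedAddCommGroup E] [NormedSpace 𝕜 E] [Fintype κ] [DecidableEq κ]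
  {A : E → Matrix κ κ 𝕂} {x : E}

theorem det_updateRow_eq_sum_adjugate_mul {R : Type*} [CommRing R] (M : Matrix κ κ R) (i : κ)
    (w : κ → R) : (M.updateRow i w).det = ∑ k, M.adjugate k i * w k := by
  rw [← cramer_transpose_apply, cramer_eq_adjugate_mulVec, ← adjugate_transpose]
  rfl

variable (𝕂 κ) in
/-- The determinant as a continuous multilinear map of the rows. -/
noncomputable def detRowContinuousMultilinear :
    ContinuousMultilinearMap 𝕂 (fun _ : κ => κ → 𝕂) 𝕂 where
  toMultilinearMap := detRowAlternating.toMultilinearMap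
  cont := (continuous_id (X := Matrix κ κ 𝕂)).matrix_det

theorem hasFDerivAt_matrix_det {A' : κ → κ → E →L[𝕜] 𝕂}
    (hA : ∀ a b, HasFDerivAt (fun y => A y a b) (A' a b) x) :
    HasFDerivAt (fun y => (A y).det) (∑ i, ∑ k, (A x).adjugate k i • A' i k) x := by
  have rows : HasFDerivAt (fun y a b => A y a b) (.pi fun a => .pi (A' a)) x :=
    hasFDerivAt_pi.mpr fun a => hasFDerivAt_pi.mpr (hA a)
  have chain := (((detRowContinuousMultilinear 𝕂 κ).hasFDerivAt (A x)).restrictScalars 𝕜).comp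
    x rows
  have jacobi (W : κ → κ → 𝕂) : (detRowContinuousMultilinear 𝕂 κ).linearDeriv (A x) W =
      ∑ i, ∑ k, (A x).adjugate k i * W i k :=
    (ContinuousMultilinearMap.linearDeriv_apply _ _ _).trans <|
      Finset.sum_congr rfl fun i _ => det_updateRow_eq_sum_adjugate_mul (A x) i (W i)
  refine chain.congr_fderiv (ContinuousLinearMap.ext fun v => ?_)
  simpa using jacobi fun a b => A' a b v

theorem differentiableAt_matrix_det (hA : ∀ a b, DifferentiableAt 𝕜 (fun y => A y a b) x) :
    DifferentiableAt 𝕜 (fun y => (A y).det) x :=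
  (hasFDerivAt_matrix_det fun a b => (hA a b).hasFDerivAt).differentiableAt

theorem differentiableAt_matrix_inv_apply (hA : ∀ a b, DifferentiableAt 𝕜 (fun y => A y a b) x)
    (hdet : (A x).det ≠ 0) (a b : κ) : DifferentiableAt 𝕜 (fun y => (A y)⁻¹ a b) x := by
  have adjugate_apply_differentiableAt : DifferentiableAt 𝕜 (fun y => (A y).adjugate a b) x := by
    simp only [adjugate_apply]
    refine differentiableAt_matrix_det fun c d => ?_
    simp only [updateRow_apply]
    split_ifs
    exacts [differentiableAt_const _, hA c d]
  simp only [inv_def, Ring.inverse_eq_inv', Matrix.smul_apply, smul_eq_mul]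
  exact ((differentiableAt_matrix_det hA).inv hdet).mul adjugate_apply_differentiableAt

end DeterminantCalculus

section Curvature

variable {ι : Type*} [Finite ι] [DecidableEq ι] {r : ℕ}
  {g h : (ι → ℝ) → Matrix (Fin r) (Fin r) ℂ} {x : ι → ℝ}

theorem mpd_add (hg : ∀ a b, DifferentiableAt ℝ (fun y => g y a b) x)
    (hh : ∀ a b, DifferentiableAt ℝ (fun y => h y a b) x) (j : ι) :
    mpd j (fun y => g y + h y) x = mpd j g x + mpd j h x := by
  have := Fintype.ofFinite ι
  ext a b
  simp only [mpd, pdC, of_apply, Matrix.add_apply, fderiv_fun_add (hg a b) (hh a b),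
    _root_.add_apply]

theorem mpd_smul {f : (ι → ℝ) → ℂ} (hf : DifferentiableAt ℝ f x)
    (hg : ∀ a b, DifferentiableAt ℝ (fun y => g y a b) x) (j : ι) :
    mpd j (fun y => f y • g y) x = f x • mpd j g x + pdC j f x • g x := by
  have := Fintype.ofFinite ι
  ext a b
  simp only [mpd, pdC, of_apply, Matrix.add_apply, Matrix.smul_apply, smul_eq_mul,
    fderiv_fun_mul hf (hg a b), _root_.add_apply, _root_.smul_apply, mul_comm (g x a b)]

theorem mpd_smul_const {f : (ι → ℝ) → ℂ} (hf : DifferentiableAt ℝ f x)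
    (M : Matrix (Fin r) (Fin r) ℂ) (j : ι) : mpd j (fun y => f y • M) x = pdC j f x • M := by
  have := Fintype.ofFinite ι
  ext a b
  simp [mpd, pdC, fderiv_mul_const hf, mul_comm]

theorem pdC_trace (hg : ∀ a, DifferentiableAt ℝ (fun y => g y a a) x) (j : ι) :
    pdC j (fun y => (g y).trace) x = (mpd j g x).trace := by
  have := Fintype.ofFinite ι
  simp only [pdC, trace, diag_apply, fderiv_fun_sum fun a _ => hg a, mpd, of_apply,
    _root_.sum_apply]

theorem pdC_det (hg : ∀ a b, DifferentiableAt ℝ (fun y => g y a b) x) (j : ι) :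
    pdC j (fun y => (g y).det) x = ((g x).adjugate * mpd j g x).trace := by
  have := Fintype.ofFinite ι
  rw [pdC, (hasFDerivAt_matrix_det fun a b => (hg a b).hasFDerivAt).fderiv, trace_mul_comm]
  simp [trace, mul_apply, mpd, pdC, mul_comm]

/-- The connection matrix `g⁻¹ ∂_j g`, whose `k`-th partial derivative is `Theta g j k`. -/
noncomputable def connectionMatrix (g : (ι → ℝ) → Matrix (Fin r) (Fin r) ℂ) (j : ι)
    (x : ι → ℝ) : Matrix (Fin r) (Fin r) ℂ :=
  (g x)⁻¹ * mpd j g x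

theorem differentiableAt_connectionMatrix_apply
    (hg : ∀ a b, DifferentiableAt ℝ (fun y => g y a b) x) {j : ι}
    (hg' : ∀ a b, DifferentiableAt ℝ (fun y => mpd j g y a b) x) (hdet : (g x).det ≠ 0)
    (a b : Fin r) : DifferentiableAt ℝ (fun y => connectionMatrix g j y a b) x := by
  have := Fintype.ofFinite ι
  simp only [connectionMatrix, mul_apply]
  exact .fun_sum fun c _ => (differentiableAt_matrix_inv_apply hg hdet a c).mul (hg' c b)

theorem pdC_det_eq_det_mul_trace_connectionMatrix
    (hg : ∀ a b, DifferentiableAt ℝ (fun y => g y a b) x) (hdet : (g x).det ≠ 0) (j : ι) :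
    pdC j (fun y => (g y).det) x = (g x).det * (connectionMatrix g j x).trace := by
  rw [pdC_det hg, connectionMatrix, inv_def, Ring.inverse_eq_inv', Matrix.smul_mul, trace_smul,
    smul_eq_mul, mul_inv_cancel_left₀ hdet]

theorem connectionMatrix_smul {f : (ι → ℝ) → ℂ} (hf : DifferentiableAt ℝ f x)
    (hg : ∀ a b, DifferentiableAt ℝ (fun y => g y a b) x) (hfx : f x ≠ 0)
    (hdet : (g x).det ≠ 0) (j : ι) :
    connectionMatrix (fun y => f y • g y) j x =
      connectionMatrix g j x + (pdC j f x / f x) • 1 := by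
  have inv_smul : (f x • g x)⁻¹ = (f x)⁻¹ • (g x)⁻¹ :=
    Matrix.inv_smul' (g x) (Units.mk0 _ hfx) hdet.isUnit
  rw [connectionMatrix, connectionMatrix, inv_smul, mpd_smul hf hg, Matrix.mul_add]
  simp only [Matrix.smul_mul, Matrix.mul_smul, smul_smul, nonsing_inv_mul _ hdet.isUnit,
    mul_inv_cancel₀ hfx, one_smul, div_eq_mul_inv]

theorem connectionMatrix_det_smul (hg : ∀ a b, DifferentiableAt ℝ (fun y => g y a b) x)
    (hdet : (g x).det ≠ 0) (j : ι) :
    connectionMatrix (fun y => (g y).det • g y) j x =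
      connectionMatrix g j x + (connectionMatrix g j x).trace • 1 := by
  have := Fintype.ofFinite ι
  rw [connectionMatrix_smul (differentiableAt_matrix_det hg) hg hdet hdet,
    pdC_det_eq_det_mul_trace_connectionMatrix hg hdet, mul_div_cancel_left₀ _ hdet]

theorem Theta_det_smul (hg : ∀ a b, Differentiable ℝ fun y => g y a b) {j : ι}
    (hg' : ∀ a b, Differentiable ℝ fun y => mpd j g y a b) (hdet : ∀ y, (g y).det ≠ 0) (k : ι)
    (x : ι → ℝ) :
    Theta (fun y => (g y).det • g y) j k x = Theta g j k x + (Theta g j k x).trace • 1 := by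
  have := Fintype.ofFinite ι
  have hconn (a b : Fin r) : DifferentiableAt ℝ (fun y => connectionMatrix g j y a b) x :=
    differentiableAt_connectionMatrix_apply (fun a b => hg a b x) (fun a b => hg' a b x)
      (hdet x) a b
  have htrace : DifferentiableAt ℝ (fun y => (connectionMatrix g j y).trace) x :=
    .fun_sum fun a _ => hconn a a
  have hscalar (a b : Fin r) : DifferentiableAt ℝ
      (fun y => ((connectionMatrix g j y).trace • (1 : Matrix (Fin r) (Fin r) ℂ)) a b) x :=
    htrace.mul_const _
  have connection_eq : connectionMatrix (fun y => (g y).det • g y) j =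
      fun y => connectionMatrix g j y + (connectionMatrix g j y).trace • 1 :=
    funext fun y => connectionMatrix_det_smul (fun a b => hg a b y) (hdet y) j
  change mpd k (connectionMatrix _ j) x = mpd k (connectionMatrix g j) x +
    (mpd k (connectionMatrix g j) x).trace • 1
  rw [connection_eq, mpd_add hconn hscalar, mpd_smul_const htrace, pdC_trace fun a => hconn a a]

end Curvature

section LogConcavity

variable {ι : Type*} [Fintype ι] [DecidableEq ι] {r : ℕ}
  {g : (ι → ℝ) → Matrix (Fin r) (Fin r) ℂ}

theorem differentiable_mpd_apply (hg : ∀ a b, ContDiff ℝ 2 fun x => g x a b) (j : ι)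
    (a b : Fin r) : Differentiable ℝ fun x => mpd j g x a b :=
  (((hg a b).fderiv_right (m := 1) one_add_one_eq_two.le).clm_apply
    contDiff_const).differentiable one_ne_zero

theorem griffithsLogConcave_iff : GriffithsLogConcave g ↔
    ∀ x, GriffithsNonpos fun j k => g x * Theta g j k x := by
  simp only [GriffithsLogConcave, GriffithsNonpos, ip, mulVec_mulVec]

theorem nakanoLogConcave_iff : NakanoLogConcave g ↔
    ∀ x, NakanoNonpos fun j k => g x * Theta g j k x := by
  simp only [NakanoLogConcave, NakanoNonpos, ip, mulVec_mulVec]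

end LogConcavity

theorem statement14_general {ι : Type*} [Fintype ι] [DecidableEq ι] {r : ℕ}
    {g : (ι → ℝ) → Matrix (Fin r) (Fin r) ℂ} (hpos : ∀ x, (g x).PosDef)
    (hg : ∀ a b, Differentiable ℝ fun x => g x a b)
    (hg' : ∀ j a b, Differentiable ℝ fun x => mpd j g x a b) (hconc : GriffithsLogConcave g) :
    NakanoLogConcave fun x => (g x).det • g x := by
  rw [nakanoLogConcave_iff]
  intro x
  have hdet (y : ι → ℝ) : (g y).det ≠ 0 := (hpos y).det_pos.ne'
  simp only [Theta_det_smul hg (hg' _) hdet, Matrix.smul_mul]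
  exact ((griffithsLogConcave_iff.mp hconc x).nakanoNonpos_mul_add_trace (hpos x)).smul
    (hpos x).det_pos.le

theorem statement14 {n r : ℕ} (g : (Fin n → ℝ) → Matrix (Fin r) (Fin r) ℂ)
    (hg : IsMetric g) (hconc : GriffithsLogConcave g) :
    NakanoLogConcave fun x => (g x).det • g x := by
  exact statement14_general hg.1 (fun a b => (hg.2 a b).differentiable two_ne_zero)
    (differentiable_mpd_apply hg.2) hconc
end

section
/- (Vector-valued Paley–Wiener Parseval identity) Let g : ℝⁿ → ℂ^{r×r} be a continuous metric and \tilde{g}(ξ) := (2π)ⁿ ∫_{ℝⁿ} e^{2ξ·y} g(y) dV(y). If f ∈ L²(\tilde{g}), i.e. ∫ f(ξ)* \tilde{g}(ξ) f(ξ) dV(ξ) < ∞, and F(z) := ∫_{ℝⁿ} f(ξ) e^{-iξ·z} dV(ξ) for z = x + iy ∈ ℂⁿ, then F is holomorphic on ℂⁿ and ∫_{ℂⁿ} F(x+iy)* g(y) F(x+iy) dV(x,y) = ∫_{ℝⁿ} f(ξ)* \tilde{g}(ξ) f(ξ) dV(ξ). -/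
open scoped ComplexOrder
open Matrix MeasureTheory

/-- The transformed metric `g̃(ξ) = (2π)ⁿ ∫ e^{2ξ·y} g(y) dV(y)` (entrywise). -/
noncomputable def tgauss {n r : ℕ} (g : (Fin n → ℝ) → Matrix (Fin r) (Fin r) ℂ)
    (ξ : Fin n → ℝ) : Matrix (Fin r) (Fin r) ℂ :=
  Matrix.of fun a b =>
    ((2 * Real.pi) ^ n : ℝ) * ∫ y : Fin n → ℝ, (Real.exp (2 * (ξ ⬝ᵥ y)) : ℂ) * g y a b

/-- The Fourier-Laplace transform `F(z) = ∫ f(ξ) e^{-iξ·z} dV(ξ)` (entrywise). -/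
noncomputable def FLtrans {n r : ℕ} (f : (Fin n → ℝ) → Fin r → ℂ)
    (z : Fin n → ℂ) : Fin r → ℂ := fun j =>
  ∫ ξ : Fin n → ℝ, f ξ j * Complex.exp (-Complex.I * ∑ i, (ξ i : ℂ) * z i)

/-!
On each horizontal slice, `x ↦ F (x + iy)` is the Fourier transform of `ξ ↦ e^{ξ·y} f(ξ)`, and
factoring `g y = T* T` turns the `g y`-norm into a Euclidean one. So Plancherel applies slice by
slice, and Tonelli in `y` produces `g̃`.

Finiteness of `∫ f* g̃ f` only gives `e^{ξ·y} f ∈ L²` for almost every `y`; but the set of such `y`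
is convex, so it is everything. Since `e^{c ∑ |ξ_i|}` is at most the sum of finitely many weights
`e^{ξ·s}`, the products `e^{c ∑ |ξ_i|} f` are in `L²` too, hence in `L¹`, and this is the domination
behind the convergence and the holomorphy of `F`.
-/

section Plancherel

open scoped FourierTransform SchwartzMap

variable {E H : Type*} [NormedAddCommGroup E] [InnerProductSpace ℝ E] [FiniteDimensional ℝ E]
  [MeasurableSpace E] [BorelSpace E] [NormedAddCommGroup H] [InnerProductSpace ℂ H]
  [CompleteSpace H]

theorem eLpNorm_two_sq {α G : Type*} [MeasurableSpace α] {μ : Measure α} [NormedAddCommGroup G]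
    (h : α → G) : eLpNorm h 2 μ ^ 2 = ∫⁻ x, ‖h x‖ₑ ^ 2 ∂μ := by
  simpa using eLpNorm_nnreal_pow_eq_lintegral (μ := μ) (f := h) two_ne_zero

theorem lintegral_comp_smul {G : Type*} [NormedAddCommGroup G] [NormedSpace ℝ G]
    [MeasurableSpace G] [BorelSpace G] [FiniteDimensional ℝ G] (ν : Measure G)
    [ν.IsAddHaarMeasure] {c : ℝ} (hc : c ≠ 0) (Φ : G → ENNReal) :
    ∫⁻ x, Φ (c • x) ∂ν = ENNReal.ofReal |(c ^ Module.finrank ℝ G)⁻¹| * ∫⁻ x, Φ x ∂ν := by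
  rw [← smul_eq_mul, ← lintegral_smul_measure, ← Measure.map_addHaar_smul ν hc]
  exact ((Homeomorph.smulOfNeZero c hc).measurableEmbedding.lintegral_map Φ).symm

theorem integral_schwartz_fourier_smul {G : Type*} [NormedAddCommGroup G] [NormedSpace ℂ G]
    [CompleteSpace G] (φ : 𝓢(E, ℂ)) {h : E → G} (hh : Integrable h) :
    ∫ x, 𝓕 φ x • h x = ∫ x, φ x • 𝓕 h x := by
  have hflip := VectorFourier.integral_fourierIntegral_smul_eq_flip (L := innerₗ E)
    Real.continuous_fourierChar continuous_inner (φ.integrable (μ := volume)) hh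
  rwa [flip_innerₗ] at hflip

-- Both sides are locally integrable, and a Schwartz function sees them alike: the left one through
-- the tempered distribution it defines, the right one through Fubini.
theorem fourier_toLp_two_ae_eq {h : E → H} (h1 : Integrable h) (h2 : MemLp h 2) :
    (𝓕 (h2.toLp h) : Lp H 2 (volume : Measure E)) =ᵐ[volume] 𝓕 h := by
  have hcont : Continuous (𝓕 h) :=
    VectorFourier.fourierIntegral_continuous Real.continuous_fourierChar continuous_inner h1
  refine ae_eq_of_integral_contDiff_smul_eq ((Lp.memLp _).locallyIntegrable one_le_two)
    hcont.locallyIntegrable fun ψ hψ hψc => ?_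
  have hφc : HasCompactSupport (Complex.ofRealCLM ∘ ψ) := hψc.comp_left rfl
  let φ : 𝓢(E, ℂ) := hφc.toSchwartzMap (Complex.ofRealCLM.contDiff.comp hψ)
  have hφ (u : E → H) : ∫ x, ψ x • u x = ∫ x, φ x • u x := by simp [φ]
  have hdist := DFunLike.congr_fun (Lp.fourier_toTemperedDistribution_eq (h2.toLp h)) φ
  rw [TemperedDistribution.fourier_apply, Lp.toTemperedDistribution_apply,
    Lp.toTemperedDistribution_apply] at hdist
  calc ∫ x, ψ x • (𝓕 (h2.toLp h) : Lp H 2 (volume : Measure E)) x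
      = ∫ x, 𝓕 φ x • h2.toLp h x := by rw [hφ, hdist]
    _ = ∫ x, 𝓕 φ x • h x := integral_congr_ae (h2.coeFn_toLp.mono fun x hx => by simp only [hx])
    _ = ∫ x, ψ x • 𝓕 h x := by rw [integral_schwartz_fourier_smul φ h1, hφ]

theorem lintegral_enorm_fourier_sq {h : E → H} (h1 : Integrable h) (h2 : MemLp h 2) :
    ∫⁻ x, ‖𝓕 h x‖ₑ ^ 2 = ∫⁻ x, ‖h x‖ₑ ^ 2 := by
  have hnorm : ‖𝓕 (h2.toLp h)‖ₑ = ‖h2.toLp h‖ₑ := by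
    rw [← ofReal_norm, ← ofReal_norm, Lp.norm_fourier_eq]
  rw [Lp.enorm_def, Lp.enorm_def, eLpNorm_congr_ae (fourier_toLp_two_ae_eq h1 h2),
    eLpNorm_congr_ae h2.coeFn_toLp] at hnorm
  rw [← eLpNorm_two_sq, ← eLpNorm_two_sq, hnorm]

end Plancherel

section Forms

variable {κ 𝕜 : Type*} [Fintype κ] [RCLike 𝕜]

/-- The Hermitian form `v* M v`, which is the paper's `‖v‖²_{g(y)}` for `M = g y`. It takes values
in `𝕜`, like the integrands of the theorem. -/
abbrev hermitianForm (M : Matrix κ κ 𝕜) (v : κ → 𝕜) : 𝕜 :=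
  star v ⬝ᵥ M *ᵥ v

open scoped MatrixOrder in
theorem exists_continuousLinearEquiv_enorm_sq_eq {M : Matrix κ κ 𝕜} (hM : M.PosDef) :
    ∃ T : (κ → 𝕜) ≃L[𝕜] EuclideanSpace 𝕜 κ, ∀ v, ‖hermitianForm M v‖ₑ = ‖T v‖ₑ ^ 2 := by
  classical
  obtain ⟨B, hB, rfl⟩ :=
    CStarAlgebra.isStrictlyPositive_iff_eq_star_mul_self.mp hM.isStrictlyPositive
  let T := (B.toLinearEquiv' hB.invertible).toContinuousLinearEquiv.trans
    (EuclideanSpace.equiv κ 𝕜).symm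
  refine ⟨T, fun v => ?_⟩
  have hinner : star v ⬝ᵥ (star B * B) *ᵥ v = inner 𝕜 (T v) (T v) := by
    rw [star_eq_conjTranspose, ← mulVec_mulVec, dotProduct_mulVec, ← star_mulVec,
      EuclideanSpace.inner_eq_star_dotProduct, dotProduct_comm]
    rfl
  rw [hermitianForm, hinner, inner_self_eq_norm_sq_to_K, enorm_pow, ← ofReal_norm,
    RCLike.norm_ofReal, abs_norm, ofReal_norm]

variable {α : Type*} [MeasurableSpace α] {μ : Measure α}

theorem integrable_dotProduct_mulVec {A : α → Matrix κ κ 𝕜}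
    (hA : ∀ a b, Integrable (fun x => A x a b) μ) (u v : κ → 𝕜) :
    Integrable (fun x => u ⬝ᵥ A x *ᵥ v) μ :=
  integrable_finsetSum _ fun a _ => (integrable_finsetSum _ fun b _ =>
    (hA a b).mul_const (v b)).const_mul (u a)

theorem integral_dotProduct_mulVec {A : α → Matrix κ κ 𝕜}
    (hA : ∀ a b, Integrable (fun x => A x a b) μ) (u v : κ → 𝕜) :
    ∫ x, u ⬝ᵥ A x *ᵥ v ∂μ = u ⬝ᵥ Matrix.of (fun a b => ∫ x, A x a b ∂μ) *ᵥ v := by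
  have hterm (a b : κ) : Integrable (fun x => A x a b * v b) μ := (hA a b).mul_const (v b)
  simp only [dotProduct, mulVec, Matrix.of_apply]
  rw [integral_finsetSum _ fun a _ => (integrable_finsetSum _ fun b _ => hterm a b).const_mul _]
  simp_rw [integral_const_mul, integral_finsetSum _ fun b _ => hterm _ b, integral_mul_const]

theorem integral_eq_toReal_lintegral_enorm {u : α → 𝕜} (hu : AEStronglyMeasurable u μ)
    (h0 : ∀ᵐ x ∂μ, 0 ≤ u x) : ∫ x, u x ∂μ = ((∫⁻ x, ‖u x‖ₑ ∂μ).toReal : 𝕜) := by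
  rw [← integral_norm_eq_lintegral_enorm hu, ← integral_ofReal]
  exact integral_congr_ae (h0.mono fun x hx => (RCLike.norm_of_nonneg' hx).symm)

theorem enorm_integral_eq_lintegral_enorm {u : α → 𝕜} (hu : Integrable u μ)
    (h0 : ∀ᵐ x ∂μ, 0 ≤ u x) : ‖∫ x, u x ∂μ‖ₑ = ∫⁻ x, ‖u x‖ₑ ∂μ := by
  rw [integral_eq_toReal_lintegral_enorm hu.1 h0, ← ofReal_norm,
    RCLike.norm_of_nonneg ENNReal.toReal_nonneg, ENNReal.ofReal_toReal hu.2.ne]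

theorem aestronglyMeasurable_hermitianForm {A : α → Matrix κ κ 𝕜}
    (hA : ∀ a b, AEStronglyMeasurable (fun x => A x a b) μ) {u : α → κ → 𝕜}
    (hu : AEStronglyMeasurable u μ) :
    AEStronglyMeasurable (fun x => hermitianForm (A x) (u x)) μ :=
  Finset.aestronglyMeasurable_fun_sum _ fun a _ =>
    ((continuous_apply a).comp_aestronglyMeasurable hu).star.mul
      (Finset.aestronglyMeasurable_fun_sum _ fun b _ =>
        (hA a b).mul ((continuous_apply b).comp_aestronglyMeasurable hu))

theorem memLp_two_of_lintegral_enorm_hermitianForm_lt_top {M : Matrix κ κ 𝕜} (hM : M.PosDef)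
    {u : α → κ → 𝕜} (hu : AEStronglyMeasurable u μ)
    (hfin : ∫⁻ x, ‖hermitianForm M (u x)‖ₑ ∂μ < ⊤) : MemLp u 2 μ := by
  obtain ⟨T, hT⟩ := exists_continuousLinearEquiv_enorm_sq_eq hM
  have hTu : MemLp (fun x => T (u x)) 2 μ := by
    refine ⟨T.continuous.comp_aestronglyMeasurable hu, ?_⟩
    simpa only [hT, ← eLpNorm_two_sq, ENNReal.pow_lt_top_iff, two_ne_zero, or_false] using hfin
  simpa [Function.comp_def] using T.symm.toContinuousLinearMap.comp_memLp' hTu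

end Forms

section Weights

variable {ι V : Type*} [Fintype ι] [NormedAddCommGroup V] [NormedSpace ℝ V]
  {p : ENNReal} {μ : Measure (ι → ℝ)} {u : (ι → ℝ) → V}

theorem convex_setOf_memLp_exp_smul (hu : AEStronglyMeasurable u μ) :
    Convex ℝ {y : ι → ℝ | MemLp (fun ξ => Real.exp (ξ ⬝ᵥ y) • u ξ) p μ} := by
  intro y hy z hz a b ha hb hab
  refine ((hy.norm.const_mul a).add (hz.norm.const_mul b)).mono' ?_
    (Filter.Eventually.of_forall fun ξ => ?_)
  · exact (Continuous.aestronglyMeasurable (by fun_prop)).smul hu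
  have hconv := convexOn_exp.2 (Set.mem_univ (ξ ⬝ᵥ y)) (Set.mem_univ (ξ ⬝ᵥ z)) ha hb hab
  simp only [smul_eq_mul] at hconv
  simp only [norm_smul, Real.norm_eq_abs, Real.abs_exp, dotProduct_add, dotProduct_smul,
    Pi.add_apply, smul_eq_mul, ← mul_assoc, ← add_mul]
  gcongr

-- Almost every point `x` lies in `s` together with its reflection in `y`.
theorem eq_univ_of_convex_of_ae_mem {E : Type*} [AddCommGroup E] [Module ℝ E]
    [MeasurableSpace E] [MeasurableAdd E] [MeasurableNeg E] {ν : Measure E} [ν.IsAddLeftInvariant]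
    [ν.IsNegInvariant] [NeZero ν] {s : Set E} (hs : Convex ℝ s) (hae : ∀ᵐ y ∂ν, y ∈ s) :
    s = Set.univ := by
  refine Set.eq_univ_of_forall fun y => ?_
  obtain ⟨x, hx, hx'⟩ :=
    (hae.and ((ν.measurePreserving_sub_left (y + y)).quasiMeasurePreserving.ae hae)).exists
  have hmid := hs hx hx' (by norm_num) (by norm_num) (add_halves (1 : ℝ))
  rwa [← smul_add, add_sub_cancel, ← two_smul ℝ y, smul_smul, one_div_mul_cancel two_ne_zero,
    one_smul] at hmid

theorem memLp_exp_smul_of_ae (hu : AEStronglyMeasurable u)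
    (h : ∀ᵐ y : ι → ℝ, MemLp (fun ξ => Real.exp (ξ ⬝ᵥ y) • u ξ) p) (y : ι → ℝ) :
    MemLp (fun ξ => Real.exp (ξ ⬝ᵥ y) • u ξ) p :=
  Set.eq_univ_iff_forall.1 (eq_univ_of_convex_of_ae_mem (convex_setOf_memLp_exp_smul hu) h) y

-- The exponent is `ξ ⬝ᵥ (y + c • s)` for the sign vector `s` of `ξ`, one of finitely many.
theorem memLp_exp_add_sum_abs_smul (hu : AEStronglyMeasurable u μ)
    (h : ∀ y : ι → ℝ, MemLp (fun ξ => Real.exp (ξ ⬝ᵥ y) • u ξ) p μ) (y : ι → ℝ) (c : ℝ) :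
    MemLp (fun ξ => Real.exp (ξ ⬝ᵥ y + c * ∑ i, |ξ i|) • u ξ) p μ := by
  classical
  let w (s : ι → SignType) : ι → ℝ := fun i => y i + c * s i
  have hw (ξ : ι → ℝ) : ξ ⬝ᵥ y + c * ∑ i, |ξ i| = ξ ⬝ᵥ w fun i => SignType.sign (ξ i) := by
    simp only [w, dotProduct, Finset.mul_sum, ← Finset.sum_add_distrib, mul_add, mul_left_comm _ c,
      self_mul_sign]
  refine (memLp_finsetSum Finset.univ fun s _ => (h (w s)).norm).mono' ?_
    (Filter.Eventually.of_forall fun ξ => ?_)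
  · exact (Continuous.aestronglyMeasurable (by fun_prop)).smul hu
  rw [hw]
  exact Finset.single_le_sum (f := fun s => ‖Real.exp (ξ ⬝ᵥ w s) • u ξ‖)
    (fun _ _ => norm_nonneg _) (Finset.mem_univ _)

theorem integrable_exp_neg_mul_abs {a : ℝ} (ha : 0 < a) :
    Integrable fun t : ℝ => Real.exp (-a * |t|) := by
  refine .of_integral_ne_zero ?_
  rw [integral_comp_abs (f := fun t => Real.exp (-a * t)), integral_exp_mul_Ioi (neg_lt_zero.2 ha)]
  simp [ha.ne']

theorem integrable_exp_neg_mul_sum_abs {a : ℝ} (ha : 0 < a) :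
    Integrable fun ξ : ι → ℝ => Real.exp (-a * ∑ i, |ξ i|) := by
  simp_rw [Finset.mul_sum, Real.exp_sum]
  exact .fintype_prod fun _ => integrable_exp_neg_mul_abs ha

theorem integrable_exp_smul_of_memLp_two (hu : AEStronglyMeasurable u)
    (h : ∀ y : ι → ℝ, MemLp (fun ξ => Real.exp (ξ ⬝ᵥ y) • u ξ) 2) (y : ι → ℝ) :
    Integrable fun ξ => Real.exp (ξ ⬝ᵥ y) • u ξ := by
  have hdecay : MemLp (fun ξ : ι → ℝ => Real.exp (-1 * ∑ i, |ξ i|)) 2 := by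
    rw [memLp_two_iff_integrable_sq (Continuous.aestronglyMeasurable (by fun_prop))]
    refine (integrable_exp_neg_mul_sum_abs two_pos).congr (.of_forall fun ξ => ?_)
    simp only [← Real.exp_nat_mul]
    ring_nf
  refine (memLp_one_iff_integrable.1 ((memLp_exp_add_sum_abs_smul hu h y 1).smul hdecay)).congr
    (.of_forall fun ξ => ?_)
  simp only [Pi.smul_apply', smul_smul, ← Real.exp_add]
  ring_nf

end Weights

section FourierLaplace

open scoped FourierTransform

variable {ι V : Type*} [Fintype ι] [NormedAddCommGroup V] [NormedSpace ℂ V]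

/-- The linear form `z ↦ -iξ·z`, the exponent of the Fourier–Laplace transform. -/
noncomputable def laplacePhase (ξ : ι → ℝ) : (ι → ℂ) →L[ℂ] ℂ :=
  -Complex.I • ∑ i, (ξ i : ℂ) • ContinuousLinearMap.proj i

theorem laplacePhase_apply (ξ : ι → ℝ) (z : ι → ℂ) :
    laplacePhase ξ z = -Complex.I * ∑ i, (ξ i : ℂ) * z i := by
  simp [laplacePhase]

theorem re_laplacePhase (ξ : ι → ℝ) (z : ι → ℂ) :
    (laplacePhase ξ z).re = ξ ⬝ᵥ fun i => (z i).im := by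
  simp [laplacePhase_apply, dotProduct]

theorem norm_laplacePhase_le (ξ : ι → ℝ) : ‖laplacePhase ξ‖ ≤ ∑ i, |ξ i| := by
  refine ContinuousLinearMap.opNorm_le_bound _ (by positivity) fun z => ?_
  rw [laplacePhase_apply, norm_mul, norm_neg, Complex.norm_I, one_mul, Finset.sum_mul]
  refine norm_sum_le_of_le _ fun i _ => ?_
  rw [norm_mul, Complex.norm_real, Real.norm_eq_abs]
  gcongr
  exact norm_le_pi_norm z i

theorem continuous_laplacePhase : Continuous (laplacePhase : (ι → ℝ) → (ι → ℂ) →L[ℂ] ℂ) := by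
  unfold laplacePhase
  fun_prop

theorem norm_exp_laplacePhase_le {z₀ z : ι → ℂ} (hz : ‖z - z₀‖ ≤ 1) (ξ : ι → ℝ) :
    ‖Complex.exp (laplacePhase ξ z)‖ ≤
      Real.exp ((ξ ⬝ᵥ fun i => (z₀ i).im) + ∑ i, |ξ i|) := by
  rw [Complex.norm_exp, Real.exp_le_exp, ← sub_add_cancel z z₀, map_add, Complex.add_re,
    re_laplacePhase ξ z₀, add_comm]
  gcongr
  calc (laplacePhase ξ (z - z₀)).re ≤ ‖laplacePhase ξ (z - z₀)‖ := Complex.re_le_norm _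
    _ ≤ ‖laplacePhase ξ‖ * 1 := (laplacePhase ξ).le_opNorm_of_le hz
    _ ≤ ∑ i, |ξ i| := by simpa using norm_laplacePhase_le ξ

/-- The Fourier–Laplace transform `z ↦ ∫ e^{-iξ·z} u(ξ) dξ` of a function on `ℝⁿ` with values in a
complex normed space. -/
noncomputable def fourierLaplace (u : (ι → ℝ) → V) (z : ι → ℂ) : V :=
  ∫ ξ, Complex.exp (laplacePhase ξ z) • u ξ

theorem norm_exp_smul_laplacePhase_smulRight_le {z₀ z : ι → ℂ} (hz : ‖z - z₀‖ ≤ 1)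
    (ξ : ι → ℝ) (v : V) :
    ‖(Complex.exp (laplacePhase ξ z) • laplacePhase ξ).smulRight v‖ ≤
      ‖Real.exp ((ξ ⬝ᵥ fun i => (z₀ i).im) + 2 * ∑ i, |ξ i|) • v‖ := by
  rw [ContinuousLinearMap.norm_smulRight_apply, norm_smul, norm_smul, Real.norm_eq_abs,
    Real.abs_exp, two_mul, ← add_assoc, Real.exp_add _ (∑ i, |ξ i|)]
  gcongr
  · exact norm_exp_laplacePhase_le hz ξ
  · exact (norm_laplacePhase_le ξ).trans ((le_add_of_nonneg_right zero_le_one).trans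
      (Real.add_one_le_exp _))

theorem aestronglyMeasurable_exp_laplacePhase (z : ι → ℂ) :
    AEStronglyMeasurable fun ξ => Complex.exp (laplacePhase ξ z) :=
  (Complex.continuous_exp.comp
    (continuous_laplacePhase.clm_apply continuous_const)).aestronglyMeasurable

theorem integrable_exp_laplacePhase_smul {u : (ι → ℝ) → V} (hu : AEStronglyMeasurable u)
    {z : ι → ℂ} (h : Integrable fun ξ => Real.exp (ξ ⬝ᵥ fun i => (z i).im) • u ξ) :
    Integrable fun ξ => Complex.exp (laplacePhase ξ z) • u ξ :=
  h.congr' ((aestronglyMeasurable_exp_laplacePhase z).smul hu) <| .of_forall fun ξ => by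
    rw [norm_smul, norm_smul, Complex.norm_exp, re_laplacePhase, Real.norm_eq_abs, Real.abs_exp]

theorem differentiable_fourierLaplace {u : (ι → ℝ) → V} (hu : AEStronglyMeasurable u)
    (h : ∀ y : ι → ℝ, Integrable fun ξ => Real.exp (ξ ⬝ᵥ y) • u ξ) :
    Differentiable ℂ (fourierLaplace u) := by
  intro z₀
  have hbound := memLp_exp_add_sum_abs_smul hu (fun y => memLp_one_iff_integrable.2 (h y))
    (fun i => (z₀ i).im) 2
  refine (hasFDerivAt_integral_of_dominated_of_fderiv_le (Metric.ball_mem_nhds z₀ one_pos)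
    (F' := fun z ξ => (Complex.exp (laplacePhase ξ z) • laplacePhase ξ).smulRight (u ξ))
    (.of_forall fun z => (aestronglyMeasurable_exp_laplacePhase z).smul hu)
    (integrable_exp_laplacePhase_smul hu (h _)) ?_ (.of_forall fun ξ z hz => ?_)
    (memLp_one_iff_integrable.1 hbound).norm (.of_forall fun ξ z _ => ?_)).differentiableAt
  · exact (ContinuousLinearMap.smulRightL ℂ (ι → ℂ) V).aestronglyMeasurable_comp₂
      ((aestronglyMeasurable_exp_laplacePhase z₀).smul
        continuous_laplacePhase.aestronglyMeasurable) hu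
  · exact norm_exp_smul_laplacePhase_smulRight_le (mem_ball_iff_norm.1 hz).le ξ (u ξ)
  · exact (laplacePhase ξ).hasFDerivAt.cexp.smul_const (u ξ)

theorem fourierLaplace_add_mul_I (u : (ι → ℝ) → V) (x y : ι → ℝ) :
    fourierLaplace u (fun i => (x i : ℂ) + (y i : ℂ) * Complex.I) =
      fourierLaplace (fun ξ => Real.exp (ξ ⬝ᵥ y) • u ξ) fun i => (x i : ℂ) := by
  refine integral_congr_ae (.of_forall fun ξ => ?_)
  simp only [← Complex.coe_smul, smul_smul, Complex.ofReal_exp, ← Complex.exp_add]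
  congr 2
  simp only [laplacePhase_apply, dotProduct, Complex.ofReal_sum, Complex.ofReal_mul, mul_add,
    Finset.sum_add_distrib, ← mul_assoc, ← Finset.sum_mul]
  linear_combination -(∑ i, (ξ i : ℂ) * y i) * Complex.I_sq

theorem fourierLaplace_clm_comp {W : Type*} [NormedAddCommGroup W] [NormedSpace ℂ W]
    [CompleteSpace V] [CompleteSpace W] (T : V →L[ℂ] W) {u : (ι → ℝ) → V} {z : ι → ℂ}
    (hu : Integrable fun ξ => Complex.exp (laplacePhase ξ z) • u ξ) :
    fourierLaplace (fun ξ => T (u ξ)) z = T (fourierLaplace u z) := by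
  simp only [fourierLaplace, ← T.integral_comp_comm hu, map_smul]

theorem fourier_comp_ofLp_eq_fourierLaplace (h : (ι → ℝ) → V) (x : ι → ℝ) :
    𝓕 (h ∘ WithLp.ofLp : EuclideanSpace ℝ ι → V) (WithLp.toLp 2 x) =
      fourierLaplace h fun i => (((2 * Real.pi) • x) i : ℂ) := by
  rw [Real.fourier_eq', ← (PiLp.volume_preserving_toLp ι).integral_comp
    (MeasurableEquiv.toLp 2 (ι → ℝ)).measurableEmbedding]
  refine integral_congr_ae (.of_forall fun ξ => ?_)
  have hphase : ((-2 * Real.pi * inner ℝ (WithLp.toLp 2 ξ) (WithLp.toLp 2 x) : ℝ) : ℂ) *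
      Complex.I = laplacePhase ξ fun i => (((2 * Real.pi) • x) i : ℂ) := by
    simp only [PiLp.inner_apply, RCLike.inner_apply, conj_trivial, laplacePhase_apply,
      Pi.smul_apply, smul_eq_mul, Finset.mul_sum, Complex.ofReal_sum, Finset.sum_mul]
    push_cast
    exact Finset.sum_congr rfl fun i _ => by ring
  exact congrArg (fun w => Complex.exp w • h ξ) hphase

theorem lintegral_enorm_fourierLaplace_sq {H : Type*} [NormedAddCommGroup H]
    [InnerProductSpace ℂ H] [CompleteSpace H] {h : (ι → ℝ) → H}
    (h1 : Integrable h) (h2 : MemLp h 2) :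
    ∫⁻ x : ι → ℝ, ‖fourierLaplace h fun i => (x i : ℂ)‖ₑ ^ 2 =
      ENNReal.ofReal ((2 * Real.pi) ^ Fintype.card ι) * ∫⁻ ξ, ‖h ξ‖ₑ ^ 2 := by
  let k : EuclideanSpace ℝ ι → H := h ∘ WithLp.ofLp
  have htoLp := PiLp.volume_preserving_toLp ι
  have hofLp := PiLp.volume_preserving_ofLp ι
  have hemb := (MeasurableEquiv.toLp 2 (ι → ℝ)).measurableEmbedding
  have hemb' := (MeasurableEquiv.toLp 2 (ι → ℝ)).symm.measurableEmbedding
  have hparseval : ∫⁻ x : ι → ℝ, ‖𝓕 k (WithLp.toLp 2 x)‖ₑ ^ 2 = ∫⁻ ξ, ‖h ξ‖ₑ ^ 2 := calc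
    _ = ∫⁻ v, ‖𝓕 k v‖ₑ ^ 2 := htoLp.lintegral_comp_emb hemb fun v => ‖𝓕 k v‖ₑ ^ 2
    _ = ∫⁻ v, ‖k v‖ₑ ^ 2 := lintegral_enorm_fourier_sq (hofLp.integrable_comp_of_integrable h1)
      (h2.comp_measurePreserving hofLp)
    _ = ∫⁻ ξ, ‖h ξ‖ₑ ^ 2 := hofLp.lintegral_comp_emb hemb' fun ξ => ‖h ξ‖ₑ ^ 2
  have hpos : 0 < (2 * Real.pi) ^ Fintype.card ι := pow_pos Real.two_pi_pos _
  simp only [k, fourier_comp_ofLp_eq_fourierLaplace] at hparseval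
  rw [← hparseval, lintegral_comp_smul volume Real.two_pi_pos.ne' fun x : ι → ℝ =>
      ‖fourierLaplace h fun i => (x i : ℂ)‖ₑ ^ 2, ← mul_assoc, ← ENNReal.ofReal_mul hpos.le,
    Module.finrank_fintype_fun_eq_card, abs_of_pos (inv_pos.2 hpos), mul_inv_cancel₀ hpos.ne',
    ENNReal.ofReal_one, one_mul]

end FourierLaplace

section FourierLaplaceForms

variable {ι κ : Type*} [Fintype ι] [Fintype κ]

theorem lintegral_enorm_fourierLaplace_hermitianForm {M : Matrix κ κ ℂ} (hM : M.PosDef)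
    {u : (ι → ℝ) → κ → ℂ} (h1 : Integrable u) (h2 : MemLp u 2) :
    ∫⁻ x : ι → ℝ, ‖hermitianForm M (fourierLaplace u fun i => (x i : ℂ))‖ₑ =
      ENNReal.ofReal ((2 * Real.pi) ^ Fintype.card ι) * ∫⁻ ξ, ‖hermitianForm M (u ξ)‖ₑ := by
  obtain ⟨T, hT⟩ := exists_continuousLinearEquiv_enorm_sq_eq hM
  have hcomm (x : ι → ℝ) : T (fourierLaplace u fun i => (x i : ℂ)) =
      fourierLaplace (fun ξ => T (u ξ)) fun i => (x i : ℂ) :=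
    (fourierLaplace_clm_comp T.toContinuousLinearMap
      (integrable_exp_laplacePhase_smul h1.1 (by simpa [dotProduct] using h1))).symm
  simp only [hT, hcomm]
  exact lintegral_enorm_fourierLaplace_sq (T.toContinuousLinearMap.integrable_comp h1)
    (T.toContinuousLinearMap.comp_memLp' h2)

section Tonelli

variable {g : (ι → ℝ) → Matrix κ κ ℂ} (hgm : ∀ a b, AEStronglyMeasurable fun y => g y a b)
  {u : (ι → ℝ) → κ → ℂ} (hu : AEStronglyMeasurable u)

include hgm hu

theorem aestronglyMeasurable_exp_smul_hermitianForm :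
    AEStronglyMeasurable (fun q : (ι → ℝ) × (ι → ℝ) =>
      hermitianForm (g q.1) (Real.exp (q.2 ⬝ᵥ q.1) • u q.2)) := by
  refine aestronglyMeasurable_hermitianForm (fun a b => (hgm a b).comp_fst)
    (.fun_smul ?_ hu.comp_snd)
  exact Continuous.aestronglyMeasurable (by fun_prop)

theorem lintegral_lintegral_enorm_exp_smul_hermitianForm_swap :
    ∫⁻ y, ∫⁻ ξ, ‖hermitianForm (g y) (Real.exp (ξ ⬝ᵥ y) • u ξ)‖ₑ =
      ∫⁻ ξ, ∫⁻ y, ‖hermitianForm (g y) (Real.exp (ξ ⬝ᵥ y) • u ξ)‖ₑ :=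
  lintegral_lintegral_swap (aestronglyMeasurable_exp_smul_hermitianForm hgm hu).enorm

theorem memLp_exp_smul_of_lintegral_enorm_hermitianForm_lt_top (hg : ∀ᵐ y, (g y).PosDef)
    (hfin : ∫⁻ ξ, ∫⁻ y,
      ‖hermitianForm (g y) (Real.exp (ξ ⬝ᵥ y) • u ξ)‖ₑ < ⊤) (y : ι → ℝ) :
    MemLp (fun ξ => Real.exp (ξ ⬝ᵥ y) • u ξ) 2 := by
  rw [← lintegral_lintegral_enorm_exp_smul_hermitianForm_swap hgm hu] at hfin
  refine memLp_exp_smul_of_ae hu ?_ y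
  have hmeas := (aestronglyMeasurable_exp_smul_hermitianForm hgm hu).enorm.lintegral_prod_right'
  filter_upwards [hg, ae_lt_top' hmeas hfin.ne] with w hw hwfin
  refine memLp_two_of_lintegral_enorm_hermitianForm_lt_top hw (.fun_smul ?_ hu) hwfin
  exact Continuous.aestronglyMeasurable (by fun_prop)

variable (h2 : ∀ y : ι → ℝ, MemLp (fun ξ => Real.exp (ξ ⬝ᵥ y) • u ξ) 2)

include h2

theorem aestronglyMeasurable_fourierLaplace_hermitianForm :
    AEStronglyMeasurable fun p : (ι → ℝ) × (ι → ℝ) =>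
      hermitianForm (g p.2)
        (fourierLaplace u fun i => (p.1 i : ℂ) + (p.2 i : ℂ) * Complex.I) := by
  have hcont :=
    (differentiable_fourierLaplace hu (integrable_exp_smul_of_memLp_two hu h2)).continuous
  exact aestronglyMeasurable_hermitianForm (fun a b => (hgm a b).comp_snd)
    (hcont.comp (by fun_prop)).aestronglyMeasurable

theorem lintegral_enorm_fourierLaplace_hermitianForm_eq (hg : ∀ᵐ y, (g y).PosDef) :
    ∫⁻ p : (ι → ℝ) × (ι → ℝ),
        ‖hermitianForm (g p.2)
          (fourierLaplace u fun i => (p.1 i : ℂ) + (p.2 i : ℂ) * Complex.I)‖ₑ =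
      ENNReal.ofReal ((2 * Real.pi) ^ Fintype.card ι) * ∫⁻ ξ, ∫⁻ y,
        ‖hermitianForm (g y) (Real.exp (ξ ⬝ᵥ y) • u ξ)‖ₑ := by
  rw [Measure.volume_eq_prod,
    lintegral_prod_symm _ (aestronglyMeasurable_fourierLaplace_hermitianForm hgm hu h2).enorm,
    ← lintegral_lintegral_enorm_exp_smul_hermitianForm_swap hgm hu,
    ← lintegral_const_mul' _ _ ENNReal.ofReal_ne_top]
  simp only [fourierLaplace_add_mul_I]
  exact lintegral_congr_ae (hg.mono fun y hy => lintegral_enorm_fourierLaplace_hermitianForm hy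
    (integrable_exp_smul_of_memLp_two hu h2 y) (h2 y))

end Tonelli

end FourierLaplaceForms

section TransformedMetric

variable {n r : ℕ} {g : (Fin n → ℝ) → Matrix (Fin r) (Fin r) ℂ} {ξ : Fin n → ℝ}

theorem hermitianForm_exp_smul {κ : Type*} [Fintype κ] (M : Matrix κ κ ℂ) (v : κ → ℂ)
    (t : ℝ) : hermitianForm M (Real.exp t • v) = hermitianForm ((Real.exp (2 * t) : ℂ) • M) v := by
  rw [hermitianForm, star_smul, star_trivial, mulVec_smul, smul_dotProduct, dotProduct_smul,
    smul_smul, ← Real.exp_add, ← two_mul, hermitianForm, smul_mulVec, dotProduct_smul,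
    Complex.coe_smul]

variable (hgint : ∀ a b, Integrable fun y : Fin n → ℝ => (Real.exp (2 * (ξ ⬝ᵥ y)) : ℂ) * g y a b)

include hgint

theorem integrable_exp_smul_hermitianForm (v : Fin r → ℂ) :
    Integrable fun y => hermitianForm (g y) (Real.exp (ξ ⬝ᵥ y) • v) := by
  simp only [hermitianForm_exp_smul]
  exact integrable_dotProduct_mulVec hgint (star v) v

theorem hermitianForm_tgauss (v : Fin r → ℂ) :
    hermitianForm (tgauss g ξ) v = ((2 * Real.pi) ^ n : ℝ) *
      ∫ y, hermitianForm (g y) (Real.exp (ξ ⬝ᵥ y) • v) := by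
  have htgauss : tgauss g ξ = (((2 * Real.pi) ^ n : ℝ) : ℂ) •
      Matrix.of fun a b => ∫ y, (Real.exp (2 * (ξ ⬝ᵥ y)) : ℂ) * g y a b := rfl
  rw [htgauss, hermitianForm, smul_mulVec, dotProduct_smul, smul_eq_mul]
  simp only [hermitianForm_exp_smul]
  exact congrArg _ (integral_dotProduct_mulVec hgint (star v) v).symm

variable (hg : ∀ᵐ y, (g y).PosSemidef) (v : Fin r → ℂ)

include hg

theorem hermitianForm_tgauss_nonneg : 0 ≤ hermitianForm (tgauss g ξ) v := by
  rw [hermitianForm_tgauss hgint]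
  refine mul_nonneg (Complex.zero_le_real.2 (by positivity)) (integral_nonneg_of_ae ?_)
  exact hg.mono fun y hy => hy.dotProduct_mulVec_nonneg _

theorem enorm_hermitianForm_tgauss :
    ‖hermitianForm (tgauss g ξ) v‖ₑ = ENNReal.ofReal ((2 * Real.pi) ^ n) *
      ∫⁻ y, ‖hermitianForm (g y) (Real.exp (ξ ⬝ᵥ y) • v)‖ₑ := by
  rw [hermitianForm_tgauss hgint, enorm_mul, enorm_integral_eq_lintegral_enorm
    (integrable_exp_smul_hermitianForm hgint v) (hg.mono fun y hy => hy.dotProduct_mulVec_nonneg _),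
    ← ofReal_norm, Complex.norm_of_nonneg (by positivity)]

end TransformedMetric

section ParsevalIdentity

variable {n r : ℕ} {g : (Fin n → ℝ) → Matrix (Fin r) (Fin r) ℂ}

theorem FLtrans_eq_fourierLaplace {f : (Fin n → ℝ) → Fin r → ℂ} {z : Fin n → ℂ}
    (hf : Integrable fun ξ => Complex.exp (laplacePhase ξ z) • f ξ) :
    FLtrans f z = fourierLaplace f z := by
  ext j
  rw [fourierLaplace, eval_integral fun i => hf.eval i]
  simp only [FLtrans, laplacePhase_apply, Pi.smul_apply, smul_eq_mul, mul_comm]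

theorem lintegral_enorm_tgauss_hermitianForm
    (hgint : ∀ (ξ : Fin n → ℝ) (a b : Fin r),
      Integrable fun y : Fin n → ℝ => (Real.exp (2 * (ξ ⬝ᵥ y)) : ℂ) * g y a b)
    (hg : ∀ᵐ y, (g y).PosSemidef) (f : (Fin n → ℝ) → Fin r → ℂ) :
    ∫⁻ ξ, ‖hermitianForm (tgauss g ξ) (f ξ)‖ₑ =
      ENNReal.ofReal ((2 * Real.pi) ^ n) * ∫⁻ ξ, ∫⁻ y,
        ‖hermitianForm (g y) (Real.exp (ξ ⬝ᵥ y) • f ξ)‖ₑ := by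
  rw [← lintegral_const_mul' _ _ ENNReal.ofReal_ne_top]
  exact lintegral_congr fun ξ => enorm_hermitianForm_tgauss (hgint ξ) hg (f ξ)

end ParsevalIdentity

theorem statement18_general {n r : ℕ} (g : (Fin n → ℝ) → Matrix (Fin r) (Fin r) ℂ)
    (hgpos : ∀ᵐ y, (g y).PosDef)
    (hgint : ∀ (ξ : Fin n → ℝ) (a b : Fin r),
      Integrable fun y : Fin n → ℝ => (Real.exp (2 * (ξ ⬝ᵥ y)) : ℂ) * g y a b)
    (f : (Fin n → ℝ) → Fin r → ℂ) (hfmeas : AEStronglyMeasurable f)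
    (hfL2 : Integrable fun ξ => star (f ξ) ⬝ᵥ (tgauss g ξ).mulVec (f ξ)) :
    Differentiable ℂ (FLtrans f) ∧
    (Integrable fun p : (Fin n → ℝ) × (Fin n → ℝ) =>
      star (FLtrans f fun i => (p.1 i : ℂ) + (p.2 i : ℂ) * Complex.I) ⬝ᵥ
        (g p.2).mulVec (FLtrans f fun i => (p.1 i : ℂ) + (p.2 i : ℂ) * Complex.I)) ∧
    (∫ p : (Fin n → ℝ) × (Fin n → ℝ),
        star (FLtrans f fun i => (p.1 i : ℂ) + (p.2 i : ℂ) * Complex.I) ⬝ᵥ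
          (g p.2).mulVec (FLtrans f fun i => (p.1 i : ℂ) + (p.2 i : ℂ) * Complex.I))
      = ∫ ξ : Fin n → ℝ, star (f ξ) ⬝ᵥ (tgauss g ξ).mulVec (f ξ) := by
  have hgsemi : ∀ᵐ y, (g y).PosSemidef := hgpos.mono fun y hy => hy.posSemidef
  have hgmeas (a b : Fin r) : AEStronglyMeasurable fun y => g y a b := by
    simpa using (hgint 0 a b).1
  have hnorm := lintegral_enorm_tgauss_hermitianForm hgint hgsemi f
  have hfin := ENNReal.lt_top_of_mul_ne_top_right (hnorm ▸ hfL2.2.ne) (by simp [Real.pi_pos])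
  have h2 := memLp_exp_smul_of_lintegral_enorm_hermitianForm_lt_top hgmeas hfmeas hgpos hfin
  have h1 := integrable_exp_smul_of_memLp_two hfmeas h2
  have hF : FLtrans f = fourierLaplace f := funext fun z =>
    FLtrans_eq_fourierLaplace (integrable_exp_laplacePhase_smul hfmeas (h1 _))
  have hFmeas := aestronglyMeasurable_fourierLaplace_hermitianForm hgmeas hfmeas h2
  have hparseval := lintegral_enorm_fourierLaplace_hermitianForm_eq hgmeas hfmeas h2 hgpos
  rw [Fintype.card_fin, ← hnorm] at hparseval
  rw [hF]
  refine ⟨differentiable_fourierLaplace hfmeas h1, ⟨hFmeas, hparseval.trans_lt hfL2.2⟩, ?_⟩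
  rw [integral_eq_toReal_lintegral_enorm hFmeas, hparseval,
    integral_eq_toReal_lintegral_enorm hfL2.1]
  · exact .of_forall fun ξ => hermitianForm_tgauss_nonneg (hgint ξ) hgsemi (f ξ)
  · filter_upwards [Measure.quasiMeasurePreserving_snd.ae hgsemi] with p hp
    exact hp.dotProduct_mulVec_nonneg _

theorem statement18 {n r : ℕ} (g : (Fin n → ℝ) → Matrix (Fin r) (Fin r) ℂ)
    (hgpos : ∀ y, (g y).PosDef) (hgcont : ∀ a b, Continuous fun y => g y a b)
    (hgint : ∀ (ξ : Fin n → ℝ) (a b : Fin r),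
      Integrable fun y : Fin n → ℝ => (Real.exp (2 * (ξ ⬝ᵥ y)) : ℂ) * g y a b)
    (f : (Fin n → ℝ) → Fin r → ℂ) (hfmeas : Measurable f)
    (hfL2 : Integrable fun ξ => star (f ξ) ⬝ᵥ (tgauss g ξ).mulVec (f ξ)) :
    Differentiable ℂ (FLtrans f) ∧
    (Integrable fun p : (Fin n → ℝ) × (Fin n → ℝ) =>
      star (FLtrans f fun i => (p.1 i : ℂ) + (p.2 i : ℂ) * Complex.I) ⬝ᵥ
        (g p.2).mulVec (FLtrans f fun i => (p.1 i : ℂ) + (p.2 i : ℂ) * Complex.I)) ∧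
    (∫ p : (Fin n → ℝ) × (Fin n → ℝ),
        star (FLtrans f fun i => (p.1 i : ℂ) + (p.2 i : ℂ) * Complex.I) ⬝ᵥ
          (g p.2).mulVec (FLtrans f fun i => (p.1 i : ℂ) + (p.2 i : ℂ) * Complex.I))
      = ∫ ξ : Fin n → ℝ, star (f ξ) ⬝ᵥ (tgauss g ξ).mulVec (f ξ) :=
  statement18_general g (.of_forall hgpos) hgint f hfmeas.aestronglyMeasurable hfL2
end

section
/- (Matrix-valued Prékopa theorem) Let g : ℝⁿ_y × ℝ^m_t → ℂ^{r×r} be a metric (twice differentiable, Hermitian, strictly positive definite) that is log concave in the sense of Nakano on ℝ^{n+m}, and assume all entrywise integrals \tilde{g}(t) := ∫_{ℝⁿ} g(y,t) dV(y) converge and define a twice differentiable function of t. Then \tilde{g} : ℝ^m → ℂ^{r×r} is a metric that is log concave in the sense of Nakano. -/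
open scoped ComplexOrder
open Matrix MeasureTheory

/-- Fiberwise integral `g̃(t) = ∫_{ℝⁿ} g(y,t) dV(y)` (entrywise). -/
noncomputable def fiberInt {n m r : ℕ}
    (g : ((Fin n ⊕ Fin m) → ℝ) → Matrix (Fin r) (Fin r) ℂ)
    (t : Fin m → ℝ) : Matrix (Fin r) (Fin r) ℂ :=
  Matrix.of fun a b => ∫ y : Fin n → ℝ, g (Sum.elim y t) a b

/-!
A complex matrix is regarded as a real-linear operator on `ℂ^r`, and Nakano log concavity of `g` is
written as `∑ⱼₖ ⟪(∂ₖ ∂ⱼ g) uⱼ, uₖ⟫ ≤ ⟪g⁻¹ W, W⟫` with `W = ∑ⱼ (∂ⱼ g) uⱼ`.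

For a one-dimensional fibre `[a, b]`, put `G = ∫ g` and `v = G⁻¹ ∫ W`. Since `∫ (g v - W) = 0`,
there is a curve `q` vanishing at both ends with `(g q)' = g v - W`. Log concavity of `g` at the
vectors `uⱼ` together with `q` in the fibre direction bounds `∑ⱼₖ ⟪(∂ₖ ∂ⱼ g) uⱼ, uₖ⟫` by `⟪g v, v⟫`
up to a total derivative whose boundary terms vanish, and integration gives log concavity of `G`.
Boxes follow by iteration.

Exhausting `ℝⁿ` by boxes gives an increasing sequence of metrics converging pointwise to a metric.
Along a log concave metric the forms of the dual metric `g⁻¹` are convex, so pointwise convergence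
forces convergence of first derivatives, hence of the right-hand side above. The second derivatives
on the left converge only in the sense of distributions, which suffices because the limit is
smooth enough for both sides to be continuous.
-/

open Filter Topology Set intervalIntegral
open scoped Ring RealInnerProductSpace

section SecondDerivative

variable {E F V W : Type*} [NormedAddCommGroup E] [NormedSpace ℝ E] [NormedAddCommGroup F]
  [NormedSpace ℝ F] [NormedAddCommGroup V] [NormedSpace ℝ V] [NormedAddCommGroup W]
  [NormedSpace ℝ W] {g : E → V}

lemma differentiable_fderiv_of_contDiff_two (hg : ContDiff ℝ 2 g) :
    Differentiable ℝ (fderiv ℝ g) :=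
  (hg.fderiv_right (m := 1) (by norm_num)).differentiable (by norm_num)

lemma continuous_fderiv_fderiv (hg : ContDiff ℝ 2 g) : Continuous (fderiv ℝ (fderiv ℝ g)) :=
  (hg.fderiv_right (m := 1) (by norm_num)).continuous_fderiv (by norm_num)

lemma hasFDerivAt_fderiv_apply (hg : ContDiff ℝ 2 g) (x e : E) :
    HasFDerivAt (fun y ↦ fderiv ℝ g y e) ((fderiv ℝ (fderiv ℝ g) x).flip e) x := by
  simpa using
    (differentiable_fderiv_of_contDiff_two hg x).hasFDerivAt.clm_apply (hasFDerivAt_const e x)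

lemma fderiv_fderiv_apply (hg : ContDiff ℝ 2 g) (x e f : E) :
    fderiv ℝ (fun y ↦ fderiv ℝ g y e) x f = fderiv ℝ (fderiv ℝ g) x f e := by
  rw [(hasFDerivAt_fderiv_apply hg x e).fderiv, ContinuousLinearMap.flip_apply]

lemma fderiv_fderiv_comm (hg : ContDiff ℝ 2 g) (x e f : E) :
    fderiv ℝ (fderiv ℝ g) x e f = fderiv ℝ (fderiv ℝ g) x f e :=
  hg.contDiffAt.isSymmSndFDerivAt (by simp) e f

lemma fderiv_clm_comp_apply (L : V →L[ℝ] W) (hg : Differentiable ℝ g) (x e : E) :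
    fderiv ℝ (fun y ↦ L (g y)) x e = L (fderiv ℝ g x e) :=
  congrArg (· e) (L.hasFDerivAt.comp x (hg x).hasFDerivAt).fderiv

lemma fderiv_fderiv_clm_comp_apply (L : V →L[ℝ] W) (hg : ContDiff ℝ 2 g) (x e f : E) :
    fderiv ℝ (fderiv ℝ fun y ↦ L (g y)) x e f = L (fderiv ℝ (fderiv ℝ g) x e f) := by
  rw [← fderiv_fderiv_apply (g := fun y ↦ L (g y)) (L.contDiff.comp hg)]
  simp only [fderiv_clm_comp_apply L (hg.differentiable (by norm_num))]
  exact congrArg (· e) (L.hasFDerivAt.comp x (hasFDerivAt_fderiv_apply hg x f)).fderiv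

lemma fderiv_comp_affine_apply (A : F →ᴬ[ℝ] E) (hg : Differentiable ℝ g) (x e : F) :
    fderiv ℝ (fun y ↦ g (A y)) x e = fderiv ℝ g (A x) (A.contLinear e) :=
  congrArg (· e) ((hg (A x)).hasFDerivAt.comp x A.hasFDerivAt).fderiv

lemma fderiv_fderiv_comp_affine_apply (A : F →ᴬ[ℝ] E) (hg : ContDiff ℝ 2 g) (x e f : F) :
    fderiv ℝ (fderiv ℝ fun y ↦ g (A y)) x e f =
      fderiv ℝ (fderiv ℝ g) (A x) (A.contLinear e) (A.contLinear f) := by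
  rw [← fderiv_fderiv_apply (g := fun y ↦ g (A y)) (hg.comp A.contDiff)]
  simp only [fderiv_comp_affine_apply A (hg.differentiable (by norm_num))]
  exact congrArg (· e)
    ((hasFDerivAt_fderiv_apply hg (A x) (A.contLinear f)).comp x A.hasFDerivAt).fderiv

end SecondDerivative

section Algebra

variable {E A : Type*} [NormedAddCommGroup E] [NormedSpace ℝ E] [NormedRing A]
  [NormedAlgebra ℝ A] {g : E → A}

section Star

variable [StarRing A] [ContinuousStar A] [StarModule ℝ A]

lemma isSelfAdjoint_fderiv_apply (hsa : ∀ x, IsSelfAdjoint (g x)) (x e : E) :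
    IsSelfAdjoint (fderiv ℝ g x e) := by
  have hstar : (fun y ↦ star (g y)) = g := funext hsa
  simpa [IsSelfAdjoint, hstar] using
    (congrArg (· e) (fderiv_star (𝕜 := ℝ) (f := g) (x := x))).symm

lemma isSelfAdjoint_fderiv_fderiv_apply (hg : ContDiff ℝ 2 g) (hsa : ∀ x, IsSelfAdjoint (g x))
    (x e f : E) : IsSelfAdjoint (fderiv ℝ (fderiv ℝ g) x e f) := by
  rw [← fderiv_fderiv_apply hg]
  exact isSelfAdjoint_fderiv_apply (fun y ↦ isSelfAdjoint_fderiv_apply hsa y f) x e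

end Star

section Inverse

variable [CompleteSpace A]

lemma contDiff_inverse {n : WithTop ℕ∞} (hg : ContDiff ℝ n g) (hu : ∀ x, IsUnit (g x)) :
    ContDiff ℝ n fun x ↦ (g x)⁻¹ʳ := by
  refine contDiff_iff_contDiffAt.2 fun x ↦ ?_
  obtain ⟨u, hu⟩ := hu x
  exact (hu ▸ contDiffAt_ringInverse ℝ u).comp x hg.contDiffAt

lemma fderiv_inverse_apply (hg : Differentiable ℝ g) (hu : ∀ x, IsUnit (g x)) (x e : E) :
    fderiv ℝ (fun y ↦ (g y)⁻¹ʳ) x e = -((g x)⁻¹ʳ * fderiv ℝ g x e * (g x)⁻¹ʳ) := by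
  obtain ⟨u, hux⟩ := hu x
  have hinv := hasFDerivAt_ringInverse (𝕜 := ℝ) u
  rw [hux] at hinv
  refine (congrArg (· e) (hinv.comp x (hg x).hasFDerivAt).fderiv).trans ?_
  simp [← hux]

lemma fderiv_apply_eq_neg_mul_fderiv_inverse_mul (hg : Differentiable ℝ g)
    (hu : ∀ x, IsUnit (g x)) (x e : E) :
    fderiv ℝ g x e = -(g x * fderiv ℝ (fun y ↦ (g y)⁻¹ʳ) x e * g x) := by
  rw [fderiv_inverse_apply hg hu, mul_neg, neg_mul, neg_neg, mul_assoc, mul_assoc, mul_assoc,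
    Ring.inverse_mul_cancel _ (hu x), mul_one, Ring.mul_inverse_cancel_left _ _ (hu x)]

end Inverse

/-- The curvature form `g ∂_f (g⁻¹ ∂_e g)` of a metric `g`, written out as
`∂_f ∂_e g - (∂_f g) g⁻¹ (∂_e g)`. -/
noncomputable def curvature (g : E → A) (x e f : E) : A :=
  fderiv ℝ (fderiv ℝ g) x f e - fderiv ℝ g x f * (g x)⁻¹ʳ * fderiv ℝ g x e

lemma mul_fderiv_inverse_mul_fderiv [CompleteSpace A] (hg : ContDiff ℝ 2 g)
    (hu : ∀ x, IsUnit (g x)) (x e f : E) :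
    g x * fderiv ℝ (fun y ↦ (g y)⁻¹ʳ * fderiv ℝ g y e) x f = curvature g x e f := by
  have hinv : DifferentiableAt ℝ (fun y ↦ (g y)⁻¹ʳ) x :=
    (contDiff_inverse hg hu).differentiable (by norm_num) x
  have hprod : fderiv ℝ (fun y ↦ (g y)⁻¹ʳ * fderiv ℝ g y e) x f =
      (g x)⁻¹ʳ * fderiv ℝ (fderiv ℝ g) x f e +
        fderiv ℝ (fun y ↦ (g y)⁻¹ʳ) x f * fderiv ℝ g x e :=
    congrArg (· f) (hinv.hasFDerivAt.mul' (hasFDerivAt_fderiv_apply hg x e)).fderiv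
  rw [hprod, fderiv_inverse_apply (hg.differentiable (by norm_num)) hu, mul_add,
    Ring.mul_inverse_cancel_left _ _ (hu x), neg_mul, mul_neg, ← sub_eq_add_neg, curvature]
  simp only [mul_assoc, Ring.mul_inverse_cancel_left _ _ (hu x)]

lemma star_curvature [StarRing A] [ContinuousStar A] [StarModule ℝ A] (hg : ContDiff ℝ 2 g)
    (hsa : ∀ x, IsSelfAdjoint (g x)) (x e f : E) :
    star (curvature g x e f) = curvature g x f e := by
  rw [curvature, star_sub, star_mul, star_mul, (hsa x).ringInverse.star_eq,
    (isSelfAdjoint_fderiv_apply hsa x e).star_eq, (isSelfAdjoint_fderiv_apply hsa x f).star_eq,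
    (isSelfAdjoint_fderiv_fderiv_apply hg hsa x f e).star_eq, fderiv_fderiv_comm hg,
    curvature, mul_assoc]

end Algebra

section StrictlyPositive

variable {H : Type*} [NormedAddCommGroup H] [InnerProductSpace ℝ H] {S T : H →L[ℝ] H}

instance : IsOrderedAddMonoid (H →L[ℝ] H) where
  add_le_add_left S T h U := by simpa [ContinuousLinearMap.le_def] using h

instance : IsOrderedModule ℝ (H →L[ℝ] H) :=
  .of_smul_nonneg fun c hc T hT ↦
    (c • T).nonneg_iff_isPositive.2 ((T.nonneg_iff_isPositive.1 hT).smul_of_nonneg hc)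

instance : OrderClosedTopology (H →L[ℝ] H) where
  isClosed_le' := by
    simp only [ContinuousLinearMap.le_def, ContinuousLinearMap.isPositive_iff,
      LinearMap.IsSymmetric, ofPred_and, ofPred_forall, ContinuousLinearMap.coe_coe]
    refine (isClosed_iInter fun u ↦ isClosed_iInter fun v ↦ isClosed_eq ?_ ?_).inter
      (isClosed_iInter fun u ↦ isClosed_le continuous_const ?_) <;> fun_prop

lemma inner_apply_self_le_of_le (h : S ≤ T) (u : H) : ⟪S u, u⟫ ≤ ⟪T u, u⟫ := by
  simpa [inner_sub_left] using ((S.le_def T).1 h).inner_nonneg_left u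

lemma inner_pos_of_isStrictlyPositive (hT : IsStrictlyPositive T) {u : H} (hu : u ≠ 0) :
    0 < ⟪T u, u⟫ := by
  have hpos : T.IsPositive := T.nonneg_iff_isPositive.1 hT.nonneg
  have hform : (innerₗ H ∘ₗ (T : H →ₗ[ℝ] H)).IsSymm :=
    ⟨fun x y ↦ (hpos.inner_left_eq_inner_right x y).trans (real_inner_comm _ _)⟩
  have hcs (v : H) : ⟪T u, v⟫ ^ 2 ≤ ⟪T u, u⟫ * ⟪T v, v⟫ :=
    LinearMap.BilinForm.apply_sq_le_of_symm (innerₗ H ∘ₗ (T : H →ₗ[ℝ] H))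
      hpos.inner_nonneg_left hform u v
  refine (hpos.inner_nonneg_left u).lt_of_ne' fun h0 ↦ hu ?_
  have hTu : T u = 0 := by
    have := hcs (T u)
    rw [h0, zero_mul] at this
    exact inner_self_eq_zero.1 (pow_eq_zero_iff two_ne_zero |>.1 (this.antisymm (sq_nonneg _)))
  have hinv := congrArg (· u) (Ring.inverse_mul_cancel T hT.isUnit)
  simpa [hTu] using hinv.symm

lemma isStrictlyPositive_of_inner_pos [FiniteDimensional ℝ H]
    (hsymm : (T : H →ₗ[ℝ] H).IsSymmetric) (hpos : ∀ u ≠ 0, 0 < ⟪T u, u⟫) :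
    IsStrictlyPositive T := by
  have hinj : Function.Injective (T : H →ₗ[ℝ] H) :=
    LinearMap.ker_eq_bot.1 <| LinearMap.ker_eq_bot'.2 fun u hu ↦ by
      by_contra hne
      exact (hpos u hne).ne' (by simp [show T u = 0 from hu])
  refine IsUnit.isStrictlyPositive ?_ (T.nonneg_iff_isPositive.2 ((T.isPositive_iff).2 ⟨hsymm, ?_⟩))
  · have := FiniteDimensional.complete ℝ H
    exact ContinuousLinearMap.isUnit_iff_bijective.2
      ⟨hinj, LinearMap.injective_iff_surjective.1 hinj⟩
  · intro u
    rcases eq_or_ne u 0 with rfl | hu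
    exacts [by simp, (hpos u hu).le]

lemma isStrictlyPositive_of_le [FiniteDimensional ℝ H] (hS : IsStrictlyPositive S) (h : S ≤ T) :
    IsStrictlyPositive T :=
  isStrictlyPositive_of_inner_pos
    (T.nonneg_iff_isPositive.1 (hS.nonneg.trans h)).isSymmetric fun u hu ↦
      (inner_pos_of_isStrictlyPositive hS hu).trans_le (inner_apply_self_le_of_le h u)

lemma inner_apply_comm_of_isStrictlyPositive (hT : IsStrictlyPositive T) (u v : H) :
    ⟪T u, v⟫ = ⟪u, T v⟫ :=
  (T.nonneg_iff_isPositive.1 hT.nonneg).inner_left_eq_inner_right u v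

lemma apply_inverse_apply (hT : IsUnit T) (u : H) : T (T⁻¹ʳ u) = u :=
  congrArg (· u) (Ring.mul_inverse_cancel T hT)

lemma inverse_apply_apply (hT : IsUnit T) (u : H) : T⁻¹ʳ (T u) = u :=
  congrArg (· u) (Ring.inverse_mul_cancel T hT)

/-- The maximum of the left-hand side over `u` is attained at `u = T⁻¹ w`. -/
lemma two_mul_inner_sub_le_inner_inverse (hT : IsStrictlyPositive T) (u w : H) :
    2 * ⟪w, u⟫ - ⟪T u, u⟫ ≤ ⟪T⁻¹ʳ w, w⟫ := by
  have hsq : 0 ≤ ⟪T (T⁻¹ʳ w - u), T⁻¹ʳ w - u⟫ :=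
    (T.nonneg_iff_isPositive.1 hT.nonneg).inner_nonneg_left _
  have hcross : ⟪T u, T⁻¹ʳ w⟫ = ⟪w, u⟫ := by
    rw [inner_apply_comm_of_isStrictlyPositive hT, apply_inverse_apply hT.isUnit, real_inner_comm]
  rw [map_sub, apply_inverse_apply hT.isUnit, inner_sub_left, inner_sub_right, inner_sub_right,
    hcross, real_inner_comm (T⁻¹ʳ w) w] at hsq
  linarith

lemma inner_inverse_apply_self_nonneg (hT : IsStrictlyPositive T) (w : H) : 0 ≤ ⟪T⁻¹ʳ w, w⟫ := by
  simpa using two_mul_inner_sub_le_inner_inverse hT 0 w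

lemma inner_inverse_le_inner_inverse (hS : IsStrictlyPositive S) (hT : IsStrictlyPositive T)
    (h : S ≤ T) (w : H) : ⟪T⁻¹ʳ w, w⟫ ≤ ⟪S⁻¹ʳ w, w⟫ := by
  have hST : ⟪S (T⁻¹ʳ w), T⁻¹ʳ w⟫ ≤ ⟪w, T⁻¹ʳ w⟫ := by
    simpa [apply_inverse_apply hT.isUnit] using inner_apply_self_le_of_le h (T⁻¹ʳ w)
  have := two_mul_inner_sub_le_inner_inverse hS (T⁻¹ʳ w) w
  rw [real_inner_comm]
  linarith

end StrictlyPositive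

section NakanoMetric

variable {E F H : Type*} [NormedAddCommGroup E] [NormedSpace ℝ E] [NormedAddCommGroup F]
  [NormedSpace ℝ F] [NormedAddCommGroup H] [InnerProductSpace ℝ H] {κ : Type*} [Fintype κ]

/-- The vector `∑ⱼ (∂_{eⱼ} g) uⱼ`, the first variation of the metric `g` at `x` along the
family of pairs `(eⱼ, uⱼ)`. -/
noncomputable def firstVariation (g : E → H →L[ℝ] H) (x : E) (e : κ → E) (u : κ → H) : H :=
  ∑ j, fderiv ℝ g x (e j) (u j)

/-- The number `∑ⱼₖ ⟪(∂_{eₖ} ∂_{eⱼ} g) uⱼ, uₖ⟫`, the second variation of the metric `g` at `x`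
along the family of pairs `(eⱼ, uⱼ)`. -/
noncomputable def secondVariation (g : E → H →L[ℝ] H) (x : E) (e : κ → E) (u : κ → H) : ℝ :=
  ∑ j, ∑ k, ⟪fderiv ℝ (fderiv ℝ g) x (e k) (e j) (u j), u k⟫

/-- A twice continuously differentiable operator-valued metric `g` which is log concave in the
sense of Nakano. Since `g Θ(e, f) = ∂_f ∂_e g - (∂_f g) g⁻¹ (∂_e g)`, log concavity is a bound on
the second variation by the first. Testing it on finite families of pairs `(eⱼ, uⱼ)`, and not only
on those where `e` is a fixed basis, makes the notion independent of coordinates. -/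
structure IsNakanoMetric (g : E → H →L[ℝ] H) : Prop where
  contDiff : ContDiff ℝ 2 g
  isStrictlyPositive : ∀ x, IsStrictlyPositive (g x)
  secondVariation_le : ∀ (x : E) {κ : Type} [Fintype κ] (e : κ → E) (u : κ → H),
    secondVariation g x e u ≤ ⟪(g x)⁻¹ʳ (firstVariation g x e u), firstVariation g x e u⟫

variable {g : E → H →L[ℝ] H}

lemma IsNakanoMetric.differentiable (hg : IsNakanoMetric g) : Differentiable ℝ g :=
  hg.contDiff.differentiable (by norm_num)

lemma IsNakanoMetric.isUnit (hg : IsNakanoMetric g) (x : E) : IsUnit (g x) :=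
  (hg.isStrictlyPositive x).isUnit

lemma IsNakanoMetric.isSelfAdjoint [CompleteSpace H] (hg : IsNakanoMetric g) (x : E) :
    IsSelfAdjoint (g x) :=
  ((g x).nonneg_iff_isPositive.1 (hg.isStrictlyPositive x).nonneg).isSelfAdjoint

lemma IsNakanoMetric.comp_affine (hg : IsNakanoMetric g) (A : F →ᴬ[ℝ] E) :
    IsNakanoMetric fun y ↦ g (A y) where
  contDiff := hg.contDiff.comp A.contDiff
  isStrictlyPositive y := hg.isStrictlyPositive (A y)
  secondVariation_le y κ _ e u := by
    have h := hg.secondVariation_le (A y) (fun j ↦ A.contLinear (e j)) u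
    simpa only [secondVariation, firstVariation, fderiv_comp_affine_apply A hg.differentiable,
      fderiv_fderiv_comp_affine_apply A hg.contDiff] using h

lemma sum_apply_apply_eq_sum_basis {R M N V σ : Type*} [CommSemiring R] [AddCommMonoid M]
    [Module R M] [AddCommMonoid N] [Module R N] [AddCommMonoid V] [Module R V] [Fintype σ]
    (b : Module.Basis σ R M) (B : M →ₗ[R] N →ₗ[R] V) (e : κ → M) (u : κ → N) :
    ∑ j, B (e j) (u j) = ∑ l, B (b l) (∑ j, b.repr (e j) l • u j) := by
  have hj (j : κ) : B (e j) (u j) = ∑ l, b.repr (e j) l • B (b l) (u j) := by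
    conv_lhs => rw [← b.sum_repr (e j)]
    simp only [map_sum, map_smul, LinearMap.sum_apply, LinearMap.smul_apply]
  simp only [hj, map_sum, map_smul]
  exact Finset.sum_comm

section Basis

variable {σ : Type*} [Fintype σ] (b : Module.Basis σ ℝ E) (x : E) (e : κ → E) (u : κ → H)

lemma firstVariation_eq_basis :
    firstVariation g x e u = firstVariation g x b fun l ↦ ∑ j, b.repr (e j) l • u j :=
  sum_apply_apply_eq_sum_basis b
    ((ContinuousLinearMap.coeLM ℝ : _ →ₗ[ℝ] H →ₗ[ℝ] H) ∘ₗ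
      (fderiv ℝ g x : E →ₗ[ℝ] H →L[ℝ] H)) e u

lemma secondVariation_eq_basis :
    secondVariation g x e u = secondVariation g x b fun l ↦ ∑ j, b.repr (e j) l • u j := by
  set D : E →L[ℝ] E →L[ℝ] H →L[ℝ] H := fderiv ℝ (fderiv ℝ g) x
  set u' : σ → H := fun l ↦ ∑ j, b.repr (e j) l • u j
  have hfirst (k : κ) : ∑ j, D (e k) (e j) (u j) = ∑ l, D (e k) (b l) (u' l) :=
    sum_apply_apply_eq_sum_basis b
      ((ContinuousLinearMap.coeLM ℝ : _ →ₗ[ℝ] H →ₗ[ℝ] H) ∘ₗ (D (e k) : E →ₗ[ℝ] H →L[ℝ] H)) e u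
  have hsecond (l : σ) : ∑ k, ⟪D (e k) (b l) (u' l), u k⟫ = ∑ m, ⟪D (b m) (b l) (u' l), u' m⟫ :=
    sum_apply_apply_eq_sum_basis b
      (innerₗ H ∘ₗ ((D.flip (b l)).flip (u' l) : E →ₗ[ℝ] H)) e u
  calc ∑ j, ∑ k, ⟪D (e k) (e j) (u j), u k⟫
      = ∑ k, ⟪∑ j, D (e k) (e j) (u j), u k⟫ := by
        simp only [sum_inner]; exact Finset.sum_comm
    _ = ∑ l, ∑ k, ⟪D (e k) (b l) (u' l), u k⟫ := by
        simp only [hfirst, sum_inner]; exact Finset.sum_comm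
    _ = ∑ l, ∑ m, ⟪D (b m) (b l) (u' l), u' m⟫ := by simp only [hsecond]

end Basis

lemma isNakanoMetric_of_basis {σ : Type*} [Fintype σ] (b : Module.Basis σ ℝ E)
    (hg : ContDiff ℝ 2 g) (hpos : ∀ x, IsStrictlyPositive (g x))
    (hle : ∀ x (u : σ → H),
      secondVariation g x b u ≤ ⟪(g x)⁻¹ʳ (firstVariation g x b u), firstVariation g x b u⟫) :
    IsNakanoMetric g where
  contDiff := hg
  isStrictlyPositive := hpos
  secondVariation_le x κ _ e u := by
    rw [firstVariation_eq_basis b, secondVariation_eq_basis b]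
    exact hle x _

lemma sum_inner_curvature [CompleteSpace H] (hsa : ∀ x, IsSelfAdjoint (g x)) (x : E)
    (e : κ → E) (u : κ → H) :
    ∑ j, ∑ k, ⟪curvature g x (e j) (e k) (u j), u k⟫ =
      secondVariation g x e u - ⟪(g x)⁻¹ʳ (firstVariation g x e u), firstVariation g x e u⟫ := by
  have hsymm (f : E) (v w : H) : ⟪fderiv ℝ g x f v, w⟫ = ⟪v, fderiv ℝ g x f w⟫ :=
    ContinuousLinearMap.isSelfAdjoint_iff_isSymmetric.1 (isSelfAdjoint_fderiv_apply hsa x f) v w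
  have hquad : ⟪(g x)⁻¹ʳ (firstVariation g x e u), firstVariation g x e u⟫ =
      ∑ j, ∑ k, ⟪(fderiv ℝ g x (e k) * (g x)⁻¹ʳ * fderiv ℝ g x (e j)) (u j), u k⟫ := by
    simp only [firstVariation, map_sum, sum_inner, inner_sum, ContinuousLinearMap.mul_def,
      ContinuousLinearMap.comp_apply, hsymm]
    exact Finset.sum_comm
  simp only [hquad, curvature, secondVariation, _root_.sub_apply, inner_sub_left,
    Finset.sum_sub_distrib]

end NakanoMetric

section FundamentalInequality

variable {H : Type*} [NormedAddCommGroup H] [InnerProductSpace ℝ H]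

lemma add_inner_le_inner_of_le_inner_inverse {g g₁ g₂ : H →L[ℝ] H} (hg : IsStrictlyPositive g)
    (hg₁ : (g₁ : H →ₗ[ℝ] H).IsSymmetric) {h : ℝ} {q d v w w₁ : H}
    (hle : h + 2 * ⟪q, w₁⟫ + ⟪q, g₂ q⟫ ≤ ⟪g⁻¹ʳ (g₁ q + w), g₁ q + w⟫)
    (hd : g₁ q + w = g (v - d)) :
    h + (⟪q, g₂ q + g₁ d + (w₁ + w₁)⟫ + ⟪d, g₁ q + (w + w)⟫) ≤ ⟪g v, v⟫ := by
  have hgd : 0 ≤ ⟪g d, d⟫ := (g.nonneg_iff_isPositive.1 hg.nonneg).inner_nonneg_left d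
  have hw : w = g v - g d - g₁ q := by rw [← map_sub, ← hd, add_sub_cancel_left]
  have hcross : ⟪g v, d⟫ = ⟪g d, v⟫ := by
    rw [inner_apply_comm_of_isStrictlyPositive hg, real_inner_comm]
  rw [hd, inverse_apply_apply hg.isUnit] at hle
  simp only [hw, map_sub, inner_add_right, inner_sub_left, inner_sub_right] at hle ⊢
  rw [real_inner_comm (g v) d, real_inner_comm (g d) d, hcross,
    real_inner_comm (g₁ q) d, show ⟪g₁ q, d⟫ = ⟪q, g₁ d⟫ from hg₁ q d]
  rw [real_inner_comm (g v) v, real_inner_comm (g d) v, real_inner_comm (g v) d, hcross,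
    real_inner_comm (g d) d] at hle
  linarith

section Interval

variable [CompleteSpace H] {g g₁ g₂ : ℝ → H →L[ℝ] H} {w w₁ : ℝ → H} {h : ℝ → ℝ} {a b : ℝ} {v : H}

lemma intervalIntegral_clm_apply (hg : Continuous g) (a b : ℝ) (v : H) :
    ∫ s in a..b, g s v = (∫ s in a..b, g s) v :=
  (ContinuousLinearMap.apply ℝ H v).intervalIntegral_comp_comm (hg.intervalIntegrable a b)

lemma intervalIntegral_inner_clm_apply (hg : Continuous g) (a b : ℝ) (u v : H) :
    ∫ s in a..b, ⟪g s u, v⟫ = ⟪(∫ s in a..b, g s) u, v⟫ := by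
  have hgu : Continuous fun s ↦ g s u := by fun_prop
  rw [← intervalIntegral_clm_apply hg]
  exact ((innerSL ℝ).flip v).intervalIntegral_comp_comm (hgu.intervalIntegrable a b)

/-- The solution is `q = g⁻¹ F` with `F s = ∫ σ in a..s, (g σ v - w σ)`. -/
lemma exists_differentiable_apply_add_eq (hunit : ∀ s, IsUnit (g s))
    (hg : ∀ s, HasDerivAt g (g₁ s) s) (hw : Continuous w)
    (hv : (∫ s in a..b, g s) v = ∫ s in a..b, w s) :
    ∃ q : ℝ → H, q a = 0 ∧ q b = 0 ∧ Differentiable ℝ q ∧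
      ∀ s, g₁ s (q s) + w s = g s (v - deriv q s) := by
  have hgc : Continuous g := continuous_iff_continuousAt.2 fun s ↦ (hg s).continuousAt
  have hgv : Continuous fun s ↦ g s v := by fun_prop
  set F : ℝ → H := fun s ↦ ∫ σ in a..s, (g σ v - w σ)
  have hFb : F b = 0 := by
    refine (integral_sub (hgv.intervalIntegrable a b) (hw.intervalIntegrable a b)).trans ?_
    rw [intervalIntegral_clm_apply hgc, hv, sub_self]
  have hF (s : ℝ) : HasDerivAt F (g s v - w s) s :=
    ((hgv.sub hw).integral_hasStrictDerivAt a s).hasDerivAt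
  set q : ℝ → H := fun s ↦ (g s)⁻¹ʳ (F s) with hq
  have hq' : Differentiable ℝ q := fun s ↦
    ((hg s).differentiableAt.inverse (hunit s)).clm_apply (hF s).differentiableAt
  have hgq : (fun s ↦ g s (q s)) = F := funext fun s ↦ apply_inverse_apply (hunit s) (F s)
  refine ⟨q, by simp [hq, F], by simp [hq, hFb], hq', fun s ↦ ?_⟩
  have hFs := ((hg s).clm_apply (hq' s).hasDerivAt).unique (hgq ▸ hF s)
  rw [map_sub, eq_sub_iff_add_eq, add_right_comm, hFs, sub_add_cancel]

/-- With `q` as in `exists_differentiable_apply_add_eq`, the bound at `q` reads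
`h + ⟪q, g₁ q + 2 w⟫' ≤ ⟪g v, v⟫`, and the boundary terms vanish upon integration. -/
theorem integral_le_inner_of_le_inner_inverse (hab : a ≤ b)
    (hpos : ∀ s, IsStrictlyPositive (g s)) (hsymm : ∀ s, (g₁ s : H →ₗ[ℝ] H).IsSymmetric)
    (hg : ∀ s, HasDerivAt g (g₁ s) s) (hg₁ : ∀ s, HasDerivAt g₁ (g₂ s) s)
    (hw : ∀ s, HasDerivAt w (w₁ s) s) (hh : Continuous h)
    (hle : ∀ s q, h s + 2 * ⟪q, w₁ s⟫ + ⟪q, g₂ s q⟫ ≤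
      ⟪(g s)⁻¹ʳ (g₁ s q + w s), g₁ s q + w s⟫)
    (hv : (∫ s in a..b, g s) v = ∫ s in a..b, w s) :
    ∫ s in a..b, h s ≤ ⟪∫ s in a..b, w s, v⟫ := by
  have hgc : Continuous g := continuous_iff_continuousAt.2 fun s ↦ (hg s).continuousAt
  have hwc : Continuous w := continuous_iff_continuousAt.2 fun s ↦ (hw s).continuousAt
  have hgvv : Continuous fun s ↦ ⟪g s v, v⟫ := by fun_prop
  obtain ⟨q, hqa, hqb, hq, hgq⟩ :=
    exists_differentiable_apply_add_eq (fun s ↦ (hpos s).isUnit) hg hwc hv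
  set B : ℝ → ℝ := fun s ↦ ⟪q s, g₁ s (q s) + (w s + w s)⟫ with hB
  have hB' (s : ℝ) := (hq s).hasDerivAt.inner ℝ
    (((hg₁ s).clm_apply (hq s).hasDerivAt).add ((hw s).add (hw s)))
  have hmono : B b - B a ≤ ∫ s in a..b, (⟪g s v, v⟫ - h s) :=
    sub_le_integral_of_hasDeriv_right_of_le hab
      (fun s _ ↦ (hB' s).continuousAt.continuousWithinAt) (fun s _ ↦ (hB' s).hasDerivWithinAt)
      (hgvv.sub hh).integrableOn_Icc fun s _ ↦ le_sub_iff_add_le'.2 <|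
        add_inner_le_inner_of_le_inner_inverse (hpos s) (hsymm s) (hle s (q s)) (hgq s)
  have hBab : B b - B a = 0 := by simp [hB, hqa, hqb]
  rw [hBab, integral_sub (hgvv.intervalIntegrable a b) (hh.intervalIntegrable a b),
    intervalIntegral_inner_clm_apply hgc, hv] at hmono
  linarith

end Interval

end FundamentalInequality

section ParameterIntegral

variable {E F : Type*} [NormedAddCommGroup E] [NormedSpace ℝ E] [NormedAddCommGroup F]
  [NormedSpace ℝ F] {G : ℝ × E → F}

lemma continuous_fderiv_comp_inr (hG : ContDiff ℝ 1 G) :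
    Continuous fun p ↦ (fderiv ℝ G p).comp (ContinuousLinearMap.inr ℝ ℝ E) :=
  (hG.continuous_fderiv (by norm_num)).clm_comp continuous_const

variable [ProperSpace E]

lemma hasFDerivAt_intervalIntegral (hG : ContDiff ℝ 1 G) (a b : ℝ) (x : E) :
    HasFDerivAt (fun x ↦ ∫ s in a..b, G (s, x))
      (∫ s in a..b, (fderiv ℝ G (s, x)).comp (ContinuousLinearMap.inr ℝ ℝ E)) x := by
  have hslice (y : E) : Continuous fun s : ℝ ↦ (s, y) := by fun_prop
  have hcompact : IsCompact (uIcc a b ×ˢ Metric.closedBall x 1) :=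
    isCompact_uIcc.prod (isCompact_closedBall x 1)
  obtain ⟨C, hC⟩ :=
    hcompact.exists_bound_of_continuousOn (continuous_fderiv_comp_inr hG).continuousOn
  exact hasFDerivAt_integral_of_dominated_of_fderiv_le (bound := fun _ ↦ C)
    (F' := fun y s ↦ (fderiv ℝ G (s, y)).comp (ContinuousLinearMap.inr ℝ ℝ E))
    (Metric.closedBall_mem_nhds x one_pos)
    (.of_forall fun y ↦ (hG.continuous.comp (hslice y)).aestronglyMeasurable)
    ((hG.continuous.comp (hslice x)).intervalIntegrable a b)
    ((continuous_fderiv_comp_inr hG).comp (hslice x)).aestronglyMeasurable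
    (.of_forall fun s hs y hy ↦ hC (s, y) ⟨uIoc_subset_uIcc hs, hy⟩)
    intervalIntegrable_const
    (.of_forall fun s _ y _ ↦ (hG.differentiable (by norm_num) (s, y)).hasFDerivAt.comp y
      (hasFDerivAt_prodMk_right s y))

lemma fderiv_intervalIntegral (hG : ContDiff ℝ 1 G) (a b : ℝ) :
    (fderiv ℝ fun x ↦ ∫ s in a..b, G (s, x)) = fun x ↦
      ∫ s in a..b, (fderiv ℝ G (s, x)).comp (ContinuousLinearMap.inr ℝ ℝ E) :=
  funext fun x ↦ (hasFDerivAt_intervalIntegral hG a b x).fderiv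

lemma contDiff_one_intervalIntegral (hG : ContDiff ℝ 1 G) (a b : ℝ) :
    ContDiff ℝ 1 fun x ↦ ∫ s in a..b, G (s, x) := by
  refine contDiff_one_iff_fderiv.2
    ⟨fun x ↦ (hasFDerivAt_intervalIntegral hG a b x).differentiableAt, ?_⟩
  rw [fderiv_intervalIntegral hG]
  exact continuous_parametric_intervalIntegral_of_continuous'
    (f := fun x s ↦ (fderiv ℝ G (s, x)).comp (ContinuousLinearMap.inr ℝ ℝ E))
    ((continuous_fderiv_comp_inr hG).comp continuous_swap) a b

lemma contDiff_two_intervalIntegral (hG : ContDiff ℝ 2 G) (a b : ℝ) :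
    ContDiff ℝ 2 fun x ↦ ∫ s in a..b, G (s, x) := by
  have hG₁ : ContDiff ℝ 1 G := hG.of_le (by norm_num)
  rw [← one_add_one_eq_two, contDiff_succ_iff_fderiv]
  refine ⟨fun x ↦ (hasFDerivAt_intervalIntegral hG₁ a b x).differentiableAt, by simp, ?_⟩
  rw [fderiv_intervalIntegral hG₁]
  exact contDiff_one_intervalIntegral
    (G := fun p ↦ (fderiv ℝ G p).comp (ContinuousLinearMap.inr ℝ ℝ E))
    ((hG.fderiv_right (by norm_num)).clm_comp contDiff_const) a b

lemma fderiv_intervalIntegral_apply (hG : ContDiff ℝ 1 G) (a b : ℝ) (x e : E) :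
    fderiv ℝ (fun x ↦ ∫ s in a..b, G (s, x)) x e = ∫ s in a..b, fderiv ℝ G (s, x) (0, e) := by
  rw [fderiv_intervalIntegral hG, ContinuousLinearMap.intervalIntegral_apply]
  · simp
  · exact ((continuous_fderiv_comp_inr hG).comp
      (by fun_prop : Continuous fun s : ℝ ↦ (s, x))).intervalIntegrable a b

lemma fderiv_fderiv_intervalIntegral_apply (hG : ContDiff ℝ 2 G) (a b : ℝ) (x e f : E) :
    fderiv ℝ (fderiv ℝ fun x ↦ ∫ s in a..b, G (s, x)) x e f =
      ∫ s in a..b, fderiv ℝ (fderiv ℝ G) (s, x) (0, e) (0, f) := by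
  rw [← fderiv_fderiv_apply (contDiff_two_intervalIntegral hG a b)]
  simp only [fderiv_intervalIntegral_apply (hG.of_le (by norm_num))]
  rw [fderiv_intervalIntegral_apply (G := fun p ↦ fderiv ℝ G p (0, f))
    ((hG.fderiv_right (by norm_num)).clm_apply contDiff_const)]
  simp only [fderiv_fderiv_apply hG]

end ParameterIntegral

section IntervalMarginal

variable {E H : Type*} [NormedAddCommGroup E] [NormedSpace ℝ E]
  [NormedAddCommGroup H] [InnerProductSpace ℝ H] {κ : Type*} [Fintype κ]

section Variation

variable {g : E → H →L[ℝ] H}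

lemma continuous_secondVariation (hg : ContDiff ℝ 2 g) (e : κ → E) (u : κ → H) :
    Continuous fun x ↦ secondVariation g x e u := by
  have := continuous_fderiv_fderiv hg
  unfold secondVariation
  fun_prop

lemma hasFDerivAt_firstVariation (hg : ContDiff ℝ 2 g) (x : E) (e : κ → E) (u : κ → H) :
    HasFDerivAt (fun y ↦ firstVariation g y e u)
      (∑ j, ((fderiv ℝ (fderiv ℝ g) x).flip (e j)).flip (u j)) x :=
  HasFDerivAt.fun_sum fun j _ ↦ by
    simpa using (hasFDerivAt_fderiv_apply hg x (e j)).clm_apply (hasFDerivAt_const (u j) x)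

lemma firstVariation_option_elim (x a : E) (e : κ → E) (q : H) (u : κ → H) :
    firstVariation g x (fun o : Option κ ↦ o.elim a e) (fun o ↦ o.elim q u) =
      fderiv ℝ g x a q + firstVariation g x e u := by
  simp [firstVariation, Fintype.sum_option]

lemma secondVariation_option_elim [CompleteSpace H] (hg : ContDiff ℝ 2 g)
    (hsa : ∀ x, IsSelfAdjoint (g x)) (x a : E) (e : κ → E) (q : H) (u : κ → H) :
    secondVariation g x (fun o : Option κ ↦ o.elim a e) (fun o ↦ o.elim q u) =
      secondVariation g x e u + 2 * ⟪q, ∑ j, fderiv ℝ (fderiv ℝ g) x a (e j) (u j)⟫ +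
        ⟪q, fderiv ℝ (fderiv ℝ g) x a a q⟫ := by
  have hsymm (k : κ) : ⟪fderiv ℝ (fderiv ℝ g) x (e k) a q, u k⟫ =
      ⟪q, fderiv ℝ (fderiv ℝ g) x a (e k) (u k)⟫ := by
    rw [fderiv_fderiv_comm hg]
    exact ContinuousLinearMap.isSelfAdjoint_iff_isSymmetric.1
      (isSelfAdjoint_fderiv_fderiv_apply hg hsa x a (e k)) q (u k)
  simp only [secondVariation, Fintype.sum_option, Option.elim_none, Option.elim_some,
    Finset.sum_add_distrib, hsymm, real_inner_comm q, inner_sum]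
  ring

end Variation

variable [ProperSpace E] {G : ℝ × E → H →L[ℝ] H}

lemma firstVariation_intervalIntegral [CompleteSpace H] (hG : ContDiff ℝ 1 G) (a b : ℝ) (x : E)
    (e : κ → E) (u : κ → H) :
    firstVariation (fun x ↦ ∫ s in a..b, G (s, x)) x e u =
      ∫ s in a..b, firstVariation G (s, x) (fun j ↦ (0, e j)) u := by
  have hcont (j : κ) : Continuous fun s : ℝ ↦ fderiv ℝ G (s, x) (0, e j) :=
    ((hG.continuous_fderiv (by norm_num)).comp (by fun_prop)).clm_apply continuous_const
  simp only [firstVariation]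
  rw [integral_finsetSum fun j _ ↦
    ((hcont j).clm_apply continuous_const).intervalIntegrable a b]
  simp only [fderiv_intervalIntegral_apply hG, intervalIntegral_clm_apply (hcont _)]

lemma secondVariation_intervalIntegral [CompleteSpace H] (hG : ContDiff ℝ 2 G) (a b : ℝ) (x : E)
    (e : κ → E) (u : κ → H) :
    secondVariation (fun x ↦ ∫ s in a..b, G (s, x)) x e u =
      ∫ s in a..b, secondVariation G (s, x) (fun j ↦ (0, e j)) u := by
  have hcont (j k : κ) :
      Continuous fun s : ℝ ↦ fderiv ℝ (fderiv ℝ G) (s, x) (0, e k) (0, e j) := by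
    have := continuous_fderiv_fderiv hG
    fun_prop
  have hint (j k : κ) : Continuous fun s : ℝ ↦
      ⟪fderiv ℝ (fderiv ℝ G) (s, x) (0, e k) (0, e j) (u j), u k⟫ := by
    have := hcont j k
    fun_prop
  simp only [secondVariation]
  rw [integral_finsetSum fun j _ ↦
    (continuous_finsetSum _ fun k _ ↦ hint j k).intervalIntegrable a b]
  refine Finset.sum_congr rfl fun j _ ↦ ?_
  rw [integral_finsetSum fun k _ ↦ (hint j k).intervalIntegrable a b]
  simp only [fderiv_fderiv_intervalIntegral_apply hG, intervalIntegral_inner_clm_apply (hcont _ _)]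

lemma isStrictlyPositive_intervalIntegral [FiniteDimensional ℝ H] {g : ℝ → H →L[ℝ] H}
    (hg : Continuous g) (hpos : ∀ s, IsStrictlyPositive (g s)) {a b : ℝ} (hab : a < b) :
    IsStrictlyPositive (∫ s in a..b, g s) := by
  have := FiniteDimensional.complete ℝ H
  have hnonneg : 0 ≤ ∫ s in a..b, g s := by
    rw [integral_of_le hab.le]
    exact MeasureTheory.integral_nonneg fun s ↦ (hpos s).nonneg
  refine isStrictlyPositive_of_inner_pos
    ((ContinuousLinearMap.nonneg_iff_isPositive _).1 hnonneg).isSymmetric fun u hu ↦ ?_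
  rw [← intervalIntegral_inner_clm_apply hg]
  exact intervalIntegral_pos_of_pos
    (((hg.clm_apply continuous_const).inner continuous_const).intervalIntegrable a b)
    (fun s ↦ inner_pos_of_isStrictlyPositive (hpos s) hu) hab

theorem IsNakanoMetric.intervalIntegral [FiniteDimensional ℝ H] (hG : IsNakanoMetric G) {a b : ℝ}
    (hab : a < b) : IsNakanoMetric fun x ↦ ∫ s in a..b, G (s, x) := by
  have := FiniteDimensional.complete ℝ H
  have hslice (x : E) : Continuous fun s ↦ G (s, x) := hG.contDiff.continuous.comp (by fun_prop)
  have hpos (x : E) : IsStrictlyPositive (∫ s in a..b, G (s, x)) :=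
    isStrictlyPositive_intervalIntegral (hslice x) (fun s ↦ hG.isStrictlyPositive (s, x)) hab
  refine ⟨contDiff_two_intervalIntegral hG.contDiff a b, hpos, fun x κ _ e u ↦ ?_⟩
  have hline (s : ℝ) : HasDerivAt (fun s ↦ (s, x)) ((1 : ℝ), (0 : E)) s :=
    (hasDerivAt_id s).prodMk (hasDerivAt_const s x)
  have hW (s : ℝ) := (hasFDerivAt_firstVariation hG.contDiff (s, x)
    (fun j ↦ (0, e j)) u).comp_hasDerivAt s (hline s)
  rw [secondVariation_intervalIntegral hG.contDiff,
    firstVariation_intervalIntegral (hG.contDiff.of_le (by norm_num)), real_inner_comm]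
  refine integral_le_inner_of_le_inner_inverse hab.le (fun s ↦ hG.isStrictlyPositive (s, x))
    (fun s ↦ ContinuousLinearMap.isSelfAdjoint_iff_isSymmetric.1
      (isSelfAdjoint_fderiv_apply hG.isSelfAdjoint (s, x) (1, 0)))
    (fun s ↦ (hG.differentiable (s, x)).hasFDerivAt.comp_hasDerivAt s (hline s))
    (fun s ↦ (hasFDerivAt_fderiv_apply hG.contDiff (s, x) (1, 0)).comp_hasDerivAt s (hline s))
    hW
    ((continuous_secondVariation hG.contDiff _ u).comp (by fun_prop)) (fun s q ↦ ?_)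
    (apply_inverse_apply (hpos x).isUnit _)
  have h := hG.secondVariation_le (s, x) (fun o : Option κ ↦ o.elim (1, 0) fun j ↦ (0, e j))
    (fun o ↦ o.elim q u)
  rw [firstVariation_option_elim,
    secondVariation_option_elim hG.contDiff hG.isSelfAdjoint] at h
  simpa using h

end IntervalMarginal

section BoxMarginal

variable {V : Type*} [NormedAddCommGroup V] [NormedSpace ℝ V] {n : ℕ}

lemma setIntegral_Icc_eq_intervalIntegral_cons {a b : Fin (n + 1) → ℝ} (hab : a 0 ≤ b 0)
    {f : (Fin (n + 1) → ℝ) → V} (hf : IntegrableOn f (Icc a b)) :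
    ∫ y in Icc a b, f y =
      ∫ s in a 0..b 0, ∫ y in Icc (Fin.tail a) (Fin.tail b), f (Fin.cons s y) := by
  have hmp := (volume_preserving_piFinSuccAbove (fun _ : Fin (n + 1) ↦ ℝ) 0).symm
  set φ := (MeasurableEquiv.piFinSuccAbove (fun _ : Fin (n + 1) ↦ ℝ) 0).symm
  have hφ (p : ℝ × (Fin n → ℝ)) : φ p = Fin.cons p.1 p.2 := by
    simp [φ, MeasurableEquiv.piFinSuccAbove, Fin.consEquiv]
  have hpre : φ ⁻¹' Icc a b = Icc (a 0) (b 0) ×ˢ Icc (Fin.tail a) (Fin.tail b) := by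
    ext p
    rw [mem_preimage, hφ, mem_Icc, Fin.le_cons, Fin.cons_le, mem_prod, mem_Icc, mem_Icc]
    tauto
  have hint := (hmp.integrableOn_comp_preimage φ.measurableEmbedding).2 hf
  rw [← hmp.setIntegral_preimage_emb φ.measurableEmbedding, integral_of_le hab,
    ← integral_Icc_eq_integral_Ioc]
  rw [hpre] at hint ⊢
  exact (setIntegral_prod _ hint).trans (by simp only [Function.comp_apply, hφ])

variable {H : Type*} [NormedAddCommGroup H] [InnerProductSpace ℝ H] [FiniteDimensional ℝ H]

theorem IsNakanoMetric.setIntegral_Icc {E : Type*} [NormedAddCommGroup E] [NormedSpace ℝ E]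
    [ProperSpace E] {a b : Fin n → ℝ} (hab : ∀ i, a i < b i) {g : (Fin n → ℝ) × E → H →L[ℝ] H}
    (hg : IsNakanoMetric g) : IsNakanoMetric fun x ↦ ∫ y in Icc a b, g (y, x) := by
  induction n generalizing E with
  | zero =>
    have huniv : Icc a b = univ := eq_univ_of_forall fun y ↦ ⟨fun i ↦ i.elim0, fun i ↦ i.elim0⟩
    simpa [huniv, Measure.volume_pi_eq_dirac 0] using
      hg.comp_affine (ContinuousLinearMap.inr ℝ (Fin 0 → ℝ) E).toContinuousAffineMap
  | succ n ih =>
    let A : (Fin n → ℝ) × ℝ × E →L[ℝ] (Fin (n + 1) → ℝ) × E :=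
      ((Fin.consEquivL ℝ fun _ ↦ ℝ : (ℝ × (Fin n → ℝ)) ≃L[ℝ] _).toContinuousLinearMap.comp
        ((ContinuousLinearMap.fst ℝ ℝ E).comp (.snd ℝ _ _) |>.prod (.fst ℝ _ _))).prod
        ((ContinuousLinearMap.snd ℝ ℝ E).comp (.snd ℝ _ _))
    have htail := ih (fun i ↦ hab i.succ) (hg.comp_affine A.toContinuousAffineMap)
    convert htail.intervalIntegral (hab 0) using 2 with x
    exact setIntegral_Icc_eq_intervalIntegral_cons (hab 0).le
      ((hg.contDiff.continuous.comp (by fun_prop)).continuousOn.integrableOn_compact isCompact_Icc)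

end BoxMarginal

section Convexity

variable {E : Type*} [NormedAddCommGroup E] [NormedSpace ℝ E] {f : E → ℝ}

lemma convexOn_univ_of_fderiv_fderiv_nonneg (hf : ContDiff ℝ 2 f)
    (h : ∀ x v, 0 ≤ fderiv ℝ (fderiv ℝ f) x v v) : ConvexOn ℝ univ f := by
  refine ⟨convex_univ, fun x _ y _ a b ha hb hab ↦ ?_⟩
  set ℓ : ℝ →ᴬ[ℝ] E := .lineMap x y
  have hline : ContDiff ℝ 2 fun s ↦ f (ℓ s) := hf.comp ℓ.contDiff
  have hderiv : deriv (fun s ↦ f (ℓ s)) = fun s ↦ fderiv ℝ (fun s ↦ f (ℓ s)) s 1 := rfl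
  have hconv : ConvexOn ℝ univ fun s ↦ f (ℓ s) := by
    refine convexOn_univ_of_deriv2_nonneg (hline.differentiable (by norm_num)) ?_ fun s ↦ ?_
    · exact hderiv ▸ fun s ↦ (hasFDerivAt_fderiv_apply hline s 1).differentiableAt
    · have hderiv2 : deriv^[2] (fun s ↦ f (ℓ s)) s =
          fderiv ℝ (fun s ↦ fderiv ℝ (fun s ↦ f (ℓ s)) s 1) s 1 := rfl
      rw [hderiv2, fderiv_fderiv_apply hline, fderiv_fderiv_comp_affine_apply ℓ hf]
      exact h _ _
  obtain rfl : a = 1 - b := by linarith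
  simpa [ℓ, ContinuousAffineMap.coe_lineMap_eq, AffineMap.lineMap_apply_module] using
    hconv.2 (mem_univ 0) (mem_univ 1) ha hb hab

lemma add_fderiv_apply_le_of_convexOn (hf : ConvexOn ℝ univ f) {x : E} (hx : DifferentiableAt ℝ f x)
    (v : E) : f x + fderiv ℝ f x v ≤ f (x + v) := by
  have hconv : ConvexOn ℝ univ fun s : ℝ ↦ f (AffineMap.lineMap x (x + v) s) :=
    hf.comp_affineMap (AffineMap.lineMap x (x + v))
  have hderiv : HasDerivAt (fun s : ℝ ↦ f (AffineMap.lineMap x (x + v) s)) (fderiv ℝ f x v) 0 := by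
    have hx' : HasFDerivAt f (fderiv ℝ f x) (AffineMap.lineMap x (x + v) (0 : ℝ)) := by
      simpa using hx.hasFDerivAt
    simpa [Function.comp_def] using
      hx'.comp_hasDerivAt 0 (AffineMap.hasDerivAt_lineMap (a := x) (b := x + v))
  have hslope := hconv.le_slope_of_hasDerivAt (mem_univ 0) (mem_univ 1) zero_lt_one hderiv
  simp only [slope_def_field, AffineMap.lineMap_apply_one, AffineMap.lineMap_apply_zero, sub_zero,
    div_one] at hslope
  linarith

lemma tendsto_fderiv_apply_of_convexOn {α : Type*} {l : Filter α} {F : α → E → ℝ}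
    (hconv : ∀ R, ConvexOn ℝ univ (F R)) {x : E} (hF : ∀ R, DifferentiableAt ℝ (F R) x)
    (hf : DifferentiableAt ℝ f x) (hlim : ∀ y, Tendsto (fun R ↦ F R y) l (𝓝 (f y))) (v : E) :
    Tendsto (fun R ↦ fderiv ℝ (F R) x v) l (𝓝 (fderiv ℝ f x v)) := by
  have hupper (w : E) (a : ℝ) (ha : fderiv ℝ f x w < a) : ∀ᶠ R in l, fderiv ℝ (F R) x w < a := by
    have hslope := (hf.hasFDerivAt.hasLineDerivAt w).tendsto_slope_zero_right
    obtain ⟨s, hs, hs0 : 0 < s⟩ :=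
      ((hslope.eventually_lt_const ha).and self_mem_nhdsWithin).exists
    have hFs : Tendsto (fun R ↦ s⁻¹ * (F R (x + s • w) - F R x)) l
        (𝓝 (s⁻¹ * (f (x + s • w) - f x))) := ((hlim _).sub (hlim _)).const_mul _
    filter_upwards [hFs.eventually_lt_const (by simpa using hs)] with R hR
    refine lt_of_le_of_lt ?_ hR
    have htangent := add_fderiv_apply_le_of_convexOn (hconv R) (hF R) (s • w)
    rw [map_smul, smul_eq_mul] at htangent
    rw [inv_mul_eq_div, le_div_iff₀ hs0]
    linarith
  refine tendsto_order.2 ⟨fun a ha ↦ ?_, hupper v⟩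
  filter_upwards [hupper (-v) (-a) (by simpa using ha)] with R hR
  simpa using hR

end Convexity

section DualMetric

variable {E H : Type*} [NormedAddCommGroup E] [NormedSpace ℝ E]

lemma fderiv_fderiv_inverse_apply {A : Type*} [NormedRing A] [NormedAlgebra ℝ A] [CompleteSpace A]
    {g : E → A} (hg : ContDiff ℝ 2 g) (hu : ∀ x, IsUnit (g x)) (x e f : E) :
    fderiv ℝ (fderiv ℝ fun y ↦ (g y)⁻¹ʳ) x f e =
      (g x)⁻¹ʳ * (fderiv ℝ g x e * (g x)⁻¹ʳ * fderiv ℝ g x f - curvature g x e f) * (g x)⁻¹ʳ := by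
  have hgd : Differentiable ℝ g := hg.differentiable (by norm_num)
  have hinv : ContDiff ℝ 2 fun y ↦ (g y)⁻¹ʳ := contDiff_inverse hg hu
  have hinvd : DifferentiableAt ℝ (fun y ↦ (g y)⁻¹ʳ) x := hinv.differentiable (by norm_num) x
  have hleft : DifferentiableAt ℝ (fun y ↦ (g y)⁻¹ʳ * fderiv ℝ g y e) x :=
    hinvd.mul (hasFDerivAt_fderiv_apply hg x e).differentiableAt
  have hleft' : fderiv ℝ (fun y ↦ (g y)⁻¹ʳ * fderiv ℝ g y e) x f =
      (g x)⁻¹ʳ * curvature g x e f := by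
    rw [← mul_fderiv_inverse_mul_fderiv hg hu, Ring.inverse_mul_cancel_left _ _ (hu x)]
  have hprod : fderiv ℝ (fun y ↦ -((g y)⁻¹ʳ * fderiv ℝ g y e * (g y)⁻¹ʳ)) x f =
      -((g x)⁻¹ʳ * fderiv ℝ g x e * fderiv ℝ (fun y ↦ (g y)⁻¹ʳ) x f +
        fderiv ℝ (fun y ↦ (g y)⁻¹ʳ * fderiv ℝ g y e) x f * (g x)⁻¹ʳ) :=
    congrArg (· f) (hleft.hasFDerivAt.mul' hinvd.hasFDerivAt).neg.fderiv
  rw [← fderiv_fderiv_apply hinv]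
  simp only [fderiv_inverse_apply hgd hu]
  rw [hprod, hleft', fderiv_inverse_apply hgd hu]
  noncomm_ring

variable [NormedAddCommGroup H] [InnerProductSpace ℝ H] [CompleteSpace H] {g : E → H →L[ℝ] H}

lemma IsNakanoMetric.inner_curvature_apply_self_nonpos (hg : IsNakanoMetric g) (x e : E) (u : H) :
    ⟪curvature g x e e u, u⟫ ≤ 0 := by
  have hsum := sum_inner_curvature hg.isSelfAdjoint x (fun _ : Unit ↦ e) fun _ ↦ u
  rw [Fintype.sum_unique, Fintype.sum_unique] at hsum
  exact hsum.trans_le (sub_nonpos.2 (hg.secondVariation_le x _ _))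

theorem IsNakanoMetric.convexOn_inner_inverse (hg : IsNakanoMetric g) (u : H) :
    ConvexOn ℝ univ fun x ↦ ⟪(g x)⁻¹ʳ u, u⟫ := by
  set L : (H →L[ℝ] H) →L[ℝ] ℝ := innerSL ℝ u ∘L ContinuousLinearMap.apply ℝ H u
  have hLapply (K : H →L[ℝ] H) : ⟪K u, u⟫ = L K := real_inner_comm _ _
  have hinv : ContDiff ℝ 2 fun x ↦ (g x)⁻¹ʳ := contDiff_inverse hg.contDiff hg.isUnit
  simp only [hLapply]
  refine convexOn_univ_of_fderiv_fderiv_nonneg (L.contDiff.comp hinv) fun x v ↦ ?_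
  rw [fderiv_fderiv_clm_comp_apply L hinv, fderiv_fderiv_inverse_apply hg.contDiff hg.isUnit,
    ← hLapply]
  have hsymm (w : H) : ⟪fderiv ℝ g x v w, (g x)⁻¹ʳ u⟫ = ⟪w, fderiv ℝ g x v ((g x)⁻¹ʳ u)⟫ :=
    ContinuousLinearMap.isSelfAdjoint_iff_isSymmetric.1
      (isSelfAdjoint_fderiv_apply hg.isSelfAdjoint x v) w _
  have hinvsymm (w : H) : ⟪(g x)⁻¹ʳ w, u⟫ = ⟪w, (g x)⁻¹ʳ u⟫ :=
    ContinuousLinearMap.isSelfAdjoint_iff_isSymmetric.1 (hg.isSelfAdjoint x).ringInverse w u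
  simp only [ContinuousLinearMap.mul_def, ContinuousLinearMap.comp_apply, hinvsymm,
    _root_.sub_apply, inner_sub_left, hsymm]
  exact sub_nonneg.2 <| (hg.inner_curvature_apply_self_nonpos x v _).trans <|
    inner_inverse_apply_self_nonneg (hg.isStrictlyPositive x) _

lemma continuous_inner_inverse_firstVariation {κ : Type*} [Fintype κ]
    (hg : ContDiff ℝ 1 g) (hu : ∀ x, IsUnit (g x)) (e : κ → E) (u : κ → H) :
    Continuous fun x ↦ ⟪(g x)⁻¹ʳ (firstVariation g x e u), firstVariation g x e u⟫ := by
  have hinv : Continuous fun x ↦ (g x)⁻¹ʳ := (contDiff_inverse hg hu).continuous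
  have : Continuous (fderiv ℝ g) := hg.continuous_fderiv one_ne_zero
  unfold firstVariation
  fun_prop

end DualMetric

section TendstoLocallyDominated

variable {X V W Z : Type*} [TopologicalSpace X] [NormedAddCommGroup V] [NormedAddCommGroup W]
  [NormedAddCommGroup Z]

/-- Pointwise convergence of a sequence of functions dominated by a continuous function, so that
the dominated convergence theorem applies against compactly supported test functions. -/
structure TendstoLocallyDominated (F : ℕ → X → V) (f : X → V) : Prop where
  tendsto : ∀ x, Tendsto (fun R ↦ F R x) atTop (𝓝 (f x))
  exists_bound : ∃ c : X → ℝ, Continuous c ∧ ∀ R x, ‖F R x‖ ≤ c x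

namespace TendstoLocallyDominated

lemma sum {ι : Type*} (s : Finset ι) {F : ι → ℕ → X → V} {f : ι → X → V}
    (h : ∀ i, TendstoLocallyDominated (F i) (f i)) :
    TendstoLocallyDominated (fun R x ↦ ∑ i ∈ s, F i R x) fun x ↦ ∑ i ∈ s, f i x where
  tendsto x := tendsto_finsetSum _ fun i _ ↦ (h i).tendsto x
  exists_bound := by
    choose c hc hb using fun i ↦ (h i).exists_bound
    exact ⟨fun x ↦ ∑ i ∈ s, c i x, continuous_finsetSum _ fun i _ ↦ hc i,
      fun R x ↦ norm_sum_le_of_le _ fun i _ ↦ hb i R x⟩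

lemma sub {F G : ℕ → X → V} {f g : X → V} (hF : TendstoLocallyDominated F f)
    (hG : TendstoLocallyDominated G g) :
    TendstoLocallyDominated (fun R x ↦ F R x - G R x) fun x ↦ f x - g x where
  tendsto x := (hF.tendsto x).sub (hG.tendsto x)
  exists_bound :=
    let ⟨c, hc, hb⟩ := hF.exists_bound
    let ⟨c', hc', hb'⟩ := hG.exists_bound
    ⟨fun x ↦ c x + c' x, hc.add hc', fun R x ↦ norm_sub_le_of_le (hb R x) (hb' R x)⟩

variable [NormedSpace ℝ V] [NormedSpace ℝ W] [NormedSpace ℝ Z] {F : ℕ → X → V} {f : X → V}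
  {F' : ℕ → X → W} {f' : X → W}

lemma clm (h : TendstoLocallyDominated F f) (L : V →L[ℝ] W) :
    TendstoLocallyDominated (fun R x ↦ L (F R x)) fun x ↦ L (f x) where
  tendsto x := (L.continuous.tendsto _).comp (h.tendsto x)
  exists_bound :=
    let ⟨c, hc, hb⟩ := h.exists_bound
    ⟨fun x ↦ ‖L‖ * c x, hc.const_mul _, fun R x ↦ L.le_opNorm_of_le (hb R x)⟩

lemma bilinear (h : TendstoLocallyDominated F f) (h' : TendstoLocallyDominated F' f')
    (B : V →L[ℝ] W →L[ℝ] Z) :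
    TendstoLocallyDominated (fun R x ↦ B (F R x) (F' R x)) fun x ↦ B (f x) (f' x) where
  tendsto x := (B.continuous₂.tendsto _).comp ((h.tendsto x).prodMk_nhds (h'.tendsto x))
  exists_bound :=
    let ⟨c, hc, hb⟩ := h.exists_bound
    let ⟨c', hc', hb'⟩ := h'.exists_bound
    ⟨fun x ↦ ‖B‖ * c x * c' x, (hc.const_mul _).mul hc',
      fun R x ↦ B.le_of_opNorm₂_le_of_le le_rfl (hb R x) (hb' R x)⟩

lemma tendsto_integral_mul [MeasurableSpace X] [BorelSpace X] {μ : Measure X}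
    [IsFiniteMeasureOnCompacts μ] {F : ℕ → X → ℝ} {f φ : X → ℝ} (h : TendstoLocallyDominated F f)
    (hF : ∀ R, Continuous (F R)) (hφ : Continuous φ) (hs : HasCompactSupport φ) :
    Tendsto (fun R ↦ ∫ x, φ x * F R x ∂μ) atTop (𝓝 (∫ x, φ x * f x ∂μ)) := by
  obtain ⟨c, hc, hb⟩ := h.exists_bound
  refine tendsto_integral_of_dominated_convergence (fun x ↦ ‖φ x‖ * c x) (fun R ↦ ?_)
    ((hφ.norm.mul hc).integrable_of_hasCompactSupport hs.norm.mul_right)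
    (fun R ↦ .of_forall fun x ↦ ?_) (.of_forall fun x ↦ (h.tendsto x).const_mul _)
  · exact ((hφ.mul (hF R)).integrable_of_hasCompactSupport hs.mul_right).aestronglyMeasurable
  · exact (norm_mul_le _ _).trans (mul_le_mul_of_nonneg_left (hb R x) (norm_nonneg _))

section Operator

variable {H : Type*} [NormedAddCommGroup H] [InnerProductSpace ℝ H] [FiniteDimensional ℝ H]
  {K : ℕ → X → H →L[ℝ] H} {k : X → H →L[ℝ] H}

lemma of_inner_apply
    (h : ∀ u v, TendstoLocallyDominated (fun R x ↦ ⟪K R x u, v⟫) fun x ↦ ⟪k x u, v⟫) :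
    TendstoLocallyDominated K k := by
  let b := stdOrthonormalBasis ℝ H
  have hexpand (T : H →L[ℝ] H) : ∑ i, ∑ j, (ContinuousLinearMap.id ℝ ℝ).smulRight
      (InnerProductSpace.rankOne ℝ (b j) (b i)) ⟪T (b i), b j⟫ = T := by
    refine ContinuousLinearMap.coe_injective (b.toBasis.ext fun l ↦ ?_)
    simp only [ContinuousLinearMap.coe_coe, _root_.sum_apply, ContinuousLinearMap.smulRight_apply,
      ContinuousLinearMap.id_apply, _root_.smul_apply, InnerProductSpace.rankOne_apply,
      OrthonormalBasis.coe_toBasis, b.inner_eq_ite]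
    rw [Finset.sum_comm]
    simpa [real_inner_comm] using b.sum_repr' (T (b l))
  simpa only [hexpand] using
    TendstoLocallyDominated.sum Finset.univ fun i ↦ .sum Finset.univ fun j ↦
      (h (b i) (b j)).clm ((ContinuousLinearMap.id ℝ ℝ).smulRight
        (InnerProductSpace.rankOne ℝ (b j) (b i)))

lemma of_inner_apply_self (hK : ∀ R x, (K R x : H →ₗ[ℝ] H).IsSymmetric)
    (hk : ∀ x, (k x : H →ₗ[ℝ] H).IsSymmetric)
    (h : ∀ u, TendstoLocallyDominated (fun R x ↦ ⟪K R x u, u⟫) fun x ↦ ⟪k x u, u⟫) :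
    TendstoLocallyDominated K k := by
  have hpolar (T : H →L[ℝ] H) (hT : (T : H →ₗ[ℝ] H).IsSymmetric) (u v : H) :
      (ContinuousLinearMap.id ℝ ℝ).smulRight (4 : ℝ)⁻¹
        (⟪T (u + v), u + v⟫ - ⟪T (u - v), u - v⟫) = ⟪T u, v⟫ := by
    simpa [div_eq_mul_inv] using (hT.inner_map_polarization u v).symm
  refine of_inner_apply fun u v ↦ ?_
  simpa only [hpolar _ (hK _ _), hpolar _ (hk _)] using
    ((h (u + v)).sub (h (u - v))).clm ((ContinuousLinearMap.id ℝ ℝ).smulRight (4 : ℝ)⁻¹)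

end Operator

end TendstoLocallyDominated

lemma TendstoLocallyDominated.fderiv_apply_of_convexOn {E : Type*} [NormedAddCommGroup E]
    [NormedSpace ℝ E] {F : ℕ → E → ℝ} {f : E → ℝ} (h : TendstoLocallyDominated F f)
    (hconv : ∀ R, ConvexOn ℝ univ (F R)) (hF : ∀ R, Differentiable ℝ (F R))
    (hf : Differentiable ℝ f) (v : E) :
    TendstoLocallyDominated (fun R x ↦ fderiv ℝ (F R) x v) fun x ↦ fderiv ℝ f x v where
  tendsto x := tendsto_fderiv_apply_of_convexOn hconv (fun R ↦ hF R x) (hf x) h.tendsto v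
  exists_bound := by
    obtain ⟨c, hc, hb⟩ := h.exists_bound
    refine ⟨fun x ↦ c x + c (x + v) + c (x - v), by fun_prop, fun R x ↦ ?_⟩
    have hforward := add_fderiv_apply_le_of_convexOn (hconv R) (hF R x) v
    have hbackward := add_fderiv_apply_le_of_convexOn (hconv R) (hF R x) (-v)
    rw [map_neg, ← sub_eq_add_neg, ← sub_eq_add_neg] at hbackward
    have hx := abs_le.1 (hb R x)
    have hadd := abs_le.1 (hb R (x + v))
    have hsub := abs_le.1 (hb R (x - v))
    exact abs_le.2 ⟨by linarith, by linarith⟩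

end TendstoLocallyDominated

section TestFunctions

variable {E : Type*} [NormedAddCommGroup E] [NormedSpace ℝ E] [FiniteDimensional ℝ E]
  [MeasurableSpace E] [BorelSpace E] {μ : Measure E} [μ.IsAddHaarMeasure] {φ p : E → ℝ}

lemma integral_mul_fderiv_apply_of_hasCompactSupport (hφ : ContDiff ℝ 1 φ)
    (hs : HasCompactSupport φ) (hp : ContDiff ℝ 1 p) (e : E) :
    ∫ x, φ x * fderiv ℝ p x e ∂μ = -∫ x, fderiv ℝ φ x e * p x ∂μ := by
  have hdφ : Continuous fun x ↦ fderiv ℝ φ x e :=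
    (hφ.continuous_fderiv one_ne_zero).clm_apply continuous_const
  have hdp : Continuous fun x ↦ fderiv ℝ p x e :=
    (hp.continuous_fderiv one_ne_zero).clm_apply continuous_const
  exact integral_mul_fderiv_eq_neg_fderiv_mul_of_integrable
    ((hdφ.mul hp.continuous).integrable_of_hasCompactSupport (hs.fderiv_apply ℝ e).mul_right)
    ((hφ.continuous.mul hdp).integrable_of_hasCompactSupport hs.mul_right)
    ((hφ.continuous.mul hp.continuous).integrable_of_hasCompactSupport hs.mul_right)
    (fun x _ ↦ hφ.differentiable one_ne_zero x) fun x _ ↦ hp.differentiable one_ne_zero x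

lemma integral_mul_fderiv_fderiv_apply_of_hasCompactSupport (hφ : ContDiff ℝ 2 φ)
    (hs : HasCompactSupport φ) (hp : ContDiff ℝ 2 p) (e f : E) :
    ∫ x, φ x * fderiv ℝ (fderiv ℝ p) x e f ∂μ = ∫ x, fderiv ℝ (fderiv ℝ φ) x f e * p x ∂μ := by
  have hdφ : ContDiff ℝ 1 fun x ↦ fderiv ℝ φ x e :=
    (hφ.fderiv_right (by norm_num)).clm_apply contDiff_const
  have hdp : ContDiff ℝ 1 fun x ↦ fderiv ℝ p x f :=
    (hp.fderiv_right (by norm_num)).clm_apply contDiff_const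
  have hfirst := integral_mul_fderiv_apply_of_hasCompactSupport (μ := μ)
    (hφ.of_le (by norm_num)) hs hdp e
  have hsecond := integral_mul_fderiv_apply_of_hasCompactSupport (μ := μ)
    hdφ (hs.fderiv_apply ℝ e) (hp.of_le (by norm_num)) f
  simp only [fderiv_fderiv_apply hp, fderiv_fderiv_apply hφ] at hfirst hsecond
  rw [hfirst, hsecond, neg_neg]

lemma TendstoLocallyDominated.tendsto_integral_mul_fderiv_fderiv {F : ℕ → E → ℝ} {f : E → ℝ}
    (h : TendstoLocallyDominated F f) (hF : ∀ R, ContDiff ℝ 2 (F R)) (hf : ContDiff ℝ 2 f)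
    (hφ : ContDiff ℝ 2 φ) (hs : HasCompactSupport φ) (e e' : E) :
    Tendsto (fun R ↦ ∫ x, φ x * fderiv ℝ (fderiv ℝ (F R)) x e e' ∂μ) atTop
      (𝓝 (∫ x, φ x * fderiv ℝ (fderiv ℝ f) x e e' ∂μ)) := by
  have hcont : Continuous fun x ↦ fderiv ℝ (fderiv ℝ φ) x e' e :=
    ((continuous_fderiv_fderiv hφ).clm_apply continuous_const).clm_apply continuous_const
  have hsupp : HasCompactSupport fun x ↦ fderiv ℝ (fderiv ℝ φ) x e' e := by
    simpa only [fderiv_fderiv_apply hφ] using (hs.fderiv_apply ℝ e).fderiv_apply ℝ e'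
  simpa only [integral_mul_fderiv_fderiv_apply_of_hasCompactSupport hφ hs, hF, hf] using
    h.tendsto_integral_mul (fun R ↦ (hF R).continuous) hcont hsupp

lemma TendstoLocallyDominated.tendsto_integral_mul_secondVariation {H κ : Type*}
    [NormedAddCommGroup H] [InnerProductSpace ℝ H] [Fintype κ] {G : ℕ → E → H →L[ℝ] H}
    {g : E → H →L[ℝ] H} (h : TendstoLocallyDominated G g) (hG : ∀ R, ContDiff ℝ 2 (G R))
    (hg : ContDiff ℝ 2 g) (hφ : ContDiff ℝ 2 φ) (hs : HasCompactSupport φ) (e : κ → E)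
    (u : κ → H) :
    Tendsto (fun R ↦ ∫ x, φ x * secondVariation (G R) x e u ∂μ) atTop
      (𝓝 (∫ x, φ x * secondVariation g x e u ∂μ)) := by
  set L : κ → κ → (H →L[ℝ] H) →L[ℝ] ℝ :=
    fun j k ↦ innerSL ℝ (u k) ∘L ContinuousLinearMap.apply ℝ H (u j)
  have hexpand {q : E → H →L[ℝ] H} (hq : ContDiff ℝ 2 q) :
      ∫ x, φ x * secondVariation q x e u ∂μ =
        ∑ j, ∑ k, ∫ x, φ x * fderiv ℝ (fderiv ℝ fun y ↦ L j k (q y)) x (e k) (e j) ∂μ := by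
    have hint (j k : κ) : Integrable
        (fun x ↦ φ x * fderiv ℝ (fderiv ℝ fun y ↦ L j k (q y)) x (e k) (e j)) μ :=
      (hφ.continuous.mul (((continuous_fderiv_fderiv ((L j k).contDiff.comp hq)).clm_apply
        continuous_const).clm_apply continuous_const)).integrable_of_hasCompactSupport hs.mul_right
    rw [← Fintype.sum_congr _ _ fun j ↦ integral_finsetSum _ fun k _ ↦ hint j k,
      ← integral_finsetSum _ fun j _ ↦ integrable_finsetSum _ fun k _ ↦ hint j k]
    simp only [← Finset.mul_sum, fderiv_fderiv_clm_comp_apply _ hq, secondVariation,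
      real_inner_comm (u _)]
    rfl
  simp only [hexpand (hG _), hexpand hg]
  exact tendsto_finsetSum _ fun j _ ↦ tendsto_finsetSum _ fun k _ ↦
    (h.clm (L j k)).tendsto_integral_mul_fderiv_fderiv (fun R ↦ (L j k).contDiff.comp (hG R))
      ((L j k).contDiff.comp hg) hφ hs _ _

lemma le_of_forall_integral_mul_le {f g : E → ℝ} (hf : Continuous f) (hg : Continuous g)
    (h : ∀ φ : E → ℝ, ContDiff ℝ 2 φ → HasCompactSupport φ → 0 ≤ φ →
      ∫ x, φ x * f x ∂μ ≤ ∫ x, φ x * g x ∂μ) : f ≤ g := by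
  intro x₀
  by_contra! hlt
  obtain ⟨δ, hδ, hball⟩ := Metric.eventually_nhds_iff_ball.1
    (hg.continuousAt.eventually_lt hf.continuousAt hlt)
  let φ : ContDiffBump x₀ := ⟨δ / 2, δ, by positivity, by linarith⟩
  have hs : HasCompactSupport φ := φ.hasCompactSupport
  have hint {q : E → ℝ} (hq : Continuous q) : Integrable (fun x ↦ φ x * q x) μ :=
    (φ.continuous.mul hq).integrable_of_hasCompactSupport hs.mul_right
  have hnonneg (x : E) : 0 ≤ φ x * (f x - g x) := by
    by_cases hx : x ∈ Metric.ball x₀ δ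
    · exact mul_nonneg φ.nonneg (sub_nonneg.2 (hball x hx).le)
    · rw [φ.zero_of_le_dist (not_lt.1 hx), zero_mul]
  have hpos : 0 < ∫ x, φ x * (f x - g x) ∂μ := by
    have hcont : Continuous fun x ↦ φ x * (f x - g x) := φ.continuous.mul (hf.sub hg)
    refine hcont.integral_pos_of_hasCompactSupport_nonneg_nonzero hs.mul_right hnonneg
      (x := x₀) ?_
    rw [φ.one_of_mem_closedBall (Metric.mem_closedBall_self φ.rIn_pos.le), one_mul]
    exact (sub_pos.2 hlt).ne'
  simp only [mul_sub] at hpos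
  rw [integral_sub (hint hf) (hint hg), sub_pos] at hpos
  exact hpos.not_ge (h φ φ.contDiff hs fun x ↦ φ.nonneg)

end TestFunctions

section MonotoneLimit

variable {E H : Type*} [NormedAddCommGroup H] [InnerProductSpace ℝ H] [FiniteDimensional ℝ H]

section Topology

variable [TopologicalSpace E] {G : ℕ → E → H →L[ℝ] H} {g : E → H →L[ℝ] H}

lemma tendstoLocallyDominated_of_monotone (hG : ∀ R x, IsStrictlyPositive (G R x))
    (hmono : ∀ x, Monotone fun R ↦ G R x) (hlim : ∀ x, Tendsto (fun R ↦ G R x) atTop (𝓝 (g x)))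
    (hg : Continuous g) : TendstoLocallyDominated G g := by
  have hle (R : ℕ) (x : E) : G R x ≤ g x := (hmono x).ge_of_tendsto (hlim x) R
  have hgpos (x : E) : IsStrictlyPositive (g x) := isStrictlyPositive_of_le (hG 0 x) (hle 0 x)
  refine .of_inner_apply_self (fun R x ↦ inner_apply_comm_of_isStrictlyPositive (hG R x))
    (fun x ↦ inner_apply_comm_of_isStrictlyPositive (hgpos x)) fun u ↦ ⟨fun x ↦ ?_, ?_⟩
  · exact (((ContinuousLinearMap.apply ℝ H u).continuous.tendsto _).comp (hlim x)).inner
      tendsto_const_nhds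
  · refine ⟨fun x ↦ ⟪g x u, u⟫, by fun_prop, fun R x ↦ ?_⟩
    rw [Real.norm_of_nonneg (((G R x).nonneg_iff_isPositive.1 (hG R x).nonneg).inner_nonneg_left u)]
    exact inner_apply_self_le_of_le (hle R x) u

lemma TendstoLocallyDominated.inverse_of_monotone (h : TendstoLocallyDominated G g)
    (hG : ∀ R x, IsStrictlyPositive (G R x)) (hmono : ∀ x, Monotone fun R ↦ G R x)
    (hcont : Continuous (G 0)) :
    TendstoLocallyDominated (fun R x ↦ (G R x)⁻¹ʳ) fun x ↦ (g x)⁻¹ʳ := by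
  have := FiniteDimensional.complete ℝ H
  have hgpos (x : E) : IsStrictlyPositive (g x) :=
    isStrictlyPositive_of_le (hG 0 x) ((hmono x).ge_of_tendsto (h.tendsto x) 0)
  have hsymm {T : H →L[ℝ] H} (hT : IsStrictlyPositive T) :
      ((T⁻¹ʳ : H →L[ℝ] H) : H →ₗ[ℝ] H).IsSymmetric :=
    ContinuousLinearMap.isSelfAdjoint_iff_isSymmetric.1
      (T.nonneg_iff_isPositive.1 hT.nonneg).isSelfAdjoint.ringInverse
  have hcontinuousAt {T : H →L[ℝ] H} (hT : IsStrictlyPositive T) : ContinuousAt Ring.inverse T :=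
    hT.isUnit.unit_spec ▸ NormedRing.inverse_continuousAt hT.isUnit.unit
  have hcont0 : Continuous fun x ↦ (G 0 x)⁻¹ʳ :=
    continuous_iff_continuousAt.2 fun x ↦ (hcontinuousAt (hG 0 x)).comp hcont.continuousAt
  refine .of_inner_apply_self (fun R x ↦ hsymm (hG R x)) (fun x ↦ hsymm (hgpos x))
    fun u ↦ ⟨fun x ↦ ?_, ?_⟩
  · exact (((ContinuousLinearMap.apply ℝ H u).continuous.tendsto _).comp
      ((hcontinuousAt (hgpos x)).tendsto.comp (h.tendsto x))).inner tendsto_const_nhds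
  · refine ⟨fun x ↦ ⟪(G 0 x)⁻¹ʳ u, u⟫, by fun_prop, fun R x ↦ ?_⟩
    rw [Real.norm_of_nonneg (inner_inverse_apply_self_nonneg (hG R x) u)]
    exact inner_inverse_le_inner_inverse (hG 0 x) (hG R x) (hmono x R.zero_le) u

end Topology

variable [NormedAddCommGroup E] [NormedSpace ℝ E] {G : ℕ → E → H →L[ℝ] H} {g : E → H →L[ℝ] H}

/-- The forms of the dual metrics are convex, which turns their pointwise convergence into
convergence of their derivatives. -/
lemma TendstoLocallyDominated.fderiv_inverse_apply
    (h : TendstoLocallyDominated (fun R x ↦ (G R x)⁻¹ʳ) fun x ↦ (g x)⁻¹ʳ)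
    (hG : ∀ R, IsNakanoMetric (G R)) (hg : Differentiable ℝ g)
    (hpos : ∀ x, IsStrictlyPositive (g x)) (v : E) :
    TendstoLocallyDominated (fun R x ↦ fderiv ℝ (fun y ↦ (G R y)⁻¹ʳ) x v)
      fun x ↦ fderiv ℝ (fun y ↦ (g y)⁻¹ʳ) x v := by
  have := FiniteDimensional.complete ℝ H
  have hsymm {q : E → H →L[ℝ] H} (hq : ∀ x, IsStrictlyPositive (q x)) (x : E) :
      (fderiv ℝ (fun y ↦ (q y)⁻¹ʳ) x v : H →ₗ[ℝ] H).IsSymmetric :=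
    ContinuousLinearMap.isSelfAdjoint_iff_isSymmetric.1 <| isSelfAdjoint_fderiv_apply
      (fun y ↦ ((q y).nonneg_iff_isPositive.1 (hq y).nonneg).isSelfAdjoint.ringInverse) x v
  have hinv {q : E → H →L[ℝ] H} (hq : Differentiable ℝ q) (hqpos : ∀ x, IsStrictlyPositive (q x)) :
      Differentiable ℝ fun y ↦ (q y)⁻¹ʳ := hq.inverse fun x ↦ (hqpos x).isUnit
  refine .of_inner_apply_self (fun R ↦ hsymm (hG R).isStrictlyPositive) (hsymm hpos) fun u ↦ ?_
  let L : (H →L[ℝ] H) →L[ℝ] ℝ := innerSL ℝ u ∘L ContinuousLinearMap.apply ℝ H u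
  have hL (T : H →L[ℝ] H) : ⟪T u, u⟫ = L T := real_inner_comm _ _
  have hconvex (R : ℕ) := (hG R).convexOn_inner_inverse u
  simp only [hL] at hconvex ⊢
  simpa only [fderiv_clm_comp_apply L (hinv (hG _).differentiable (hG _).isStrictlyPositive),
    fderiv_clm_comp_apply L (hinv hg hpos)] using
    (h.clm L).fderiv_apply_of_convexOn hconvex
      (fun R ↦ L.differentiable.comp (hinv (hG R).differentiable (hG R).isStrictlyPositive))
      (L.differentiable.comp (hinv hg hpos)) v

lemma TendstoLocallyDominated.inner_inverse_firstVariation {κ : Type*} [Fintype κ]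
    (h : TendstoLocallyDominated G g)
    (hinv : TendstoLocallyDominated (fun R x ↦ (G R x)⁻¹ʳ) fun x ↦ (g x)⁻¹ʳ)
    (hG : ∀ R, IsNakanoMetric (G R)) (hg : Differentiable ℝ g)
    (hpos : ∀ x, IsStrictlyPositive (g x)) (e : κ → E) (u : κ → H) :
    TendstoLocallyDominated
      (fun R x ↦ ⟪(G R x)⁻¹ʳ (firstVariation (G R) x e u), firstVariation (G R) x e u⟫)
      fun x ↦ ⟪(g x)⁻¹ʳ (firstVariation g x e u), firstVariation g x e u⟫ := by
  have := FiniteDimensional.complete ℝ H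
  have hfderiv (v : E) :
      TendstoLocallyDominated (fun R x ↦ fderiv ℝ (G R) x v) fun x ↦ fderiv ℝ g x v := by
    simp only [fderiv_apply_eq_neg_mul_fderiv_inverse_mul (hG _).differentiable (hG _).isUnit,
      fderiv_apply_eq_neg_mul_fderiv_inverse_mul hg fun x ↦ (hpos x).isUnit]
    exact
      ((h.bilinear (hinv.fderiv_inverse_apply hG hg hpos v) (.mul ℝ _)).bilinear h (.mul ℝ _)).clm
        (-.id ℝ _)
  have hfirst : TendstoLocallyDominated (fun R x ↦ firstVariation (G R) x e u)
      fun x ↦ firstVariation g x e u :=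
    .sum _ fun j ↦ (hfderiv (e j)).clm (ContinuousLinearMap.apply ℝ H (u j))
  exact (hinv.bilinear hfirst (.id ℝ _)).bilinear hfirst (innerSL ℝ)

theorem isNakanoMetric_of_monotone_of_tendsto [FiniteDimensional ℝ E]
    (hG : ∀ R, IsNakanoMetric (G R)) (hmono : ∀ x, Monotone fun R ↦ G R x)
    (hlim : ∀ x, Tendsto (fun R ↦ G R x) atTop (𝓝 (g x))) (hg : ContDiff ℝ 2 g) :
    IsNakanoMetric g := by
  have hgpos (x : E) : IsStrictlyPositive (g x) := isStrictlyPositive_of_le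
    ((hG 0).isStrictlyPositive x) ((hmono x).ge_of_tendsto (hlim x) 0)
  have htend : TendstoLocallyDominated G g := tendstoLocallyDominated_of_monotone
    (fun R ↦ (hG R).isStrictlyPositive) hmono hlim hg.continuous
  have hinv := htend.inverse_of_monotone (fun R ↦ (hG R).isStrictlyPositive) hmono
    (hG 0).contDiff.continuous
  refine ⟨hg, hgpos, fun x κ _ e u ↦ ?_⟩
  have hright := htend.inner_inverse_firstVariation hinv hG (hg.differentiable (by norm_num)) hgpos
    e u
  have hcont {q : E → H →L[ℝ] H} (hq : ContDiff ℝ 2 q) (hqpos : ∀ x, IsStrictlyPositive (q x)) :=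
    continuous_inner_inverse_firstVariation (hq.of_le (by norm_num)) (fun x ↦ (hqpos x).isUnit) e u
  borelize E
  refine le_of_forall_integral_mul_le (μ := Measure.addHaar) (continuous_secondVariation hg e u)
    (hcont hg hgpos) (fun φ hφ hs hnonneg ↦ ?_) x
  refine le_of_tendsto_of_tendsto'
    (htend.tendsto_integral_mul_secondVariation (fun R ↦ (hG R).contDiff) hg hφ hs e u)
    (hright.tendsto_integral_mul (fun R ↦ hcont (hG R).contDiff (hG R).isStrictlyPositive)
      hφ.continuous hs) fun R ↦ integral_mono ?_ ?_ fun y ↦ ?_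
  · exact (hφ.continuous.mul (continuous_secondVariation (hG R).contDiff e
      u)).integrable_of_hasCompactSupport hs.mul_right
  · exact (hφ.continuous.mul (hcont (hG R).contDiff
      (hG R).isStrictlyPositive)).integrable_of_hasCompactSupport hs.mul_right
  · exact mul_le_mul_of_nonneg_left ((hG R).secondVariation_le y e u) (hnonneg y)

end MonotoneLimit

section FiberIntegral

variable {n : ℕ}

lemma iUnion_Icc_neg_natCast_add_one :
    ⋃ R : ℕ, Icc (fun _ : Fin n ↦ -((R : ℝ) + 1)) (fun _ ↦ (R : ℝ) + 1) = univ := by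
  refine eq_univ_of_forall fun y ↦ mem_iUnion.2 ?_
  obtain ⟨R, hR⟩ := exists_nat_ge ‖y‖
  have hy (i : Fin n) : |y i| ≤ R + 1 := ((norm_le_pi_norm y i).trans hR).trans (by linarith)
  exact ⟨R, fun i ↦ (abs_le.1 (hy i)).1, fun i ↦ (abs_le.1 (hy i)).2⟩

lemma monotone_Icc_neg_natCast_add_one :
    Monotone fun R : ℕ ↦ Icc (fun _ : Fin n ↦ -((R : ℝ) + 1)) (fun _ ↦ (R : ℝ) + 1) := by
  intro R R' h
  refine Icc_subset_Icc (fun _ ↦ neg_le_neg ?_) fun _ ↦ ?_ <;> simpa using h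

variable {E H : Type*} [NormedAddCommGroup E] [NormedSpace ℝ E] [FiniteDimensional ℝ E]
  [NormedAddCommGroup H] [InnerProductSpace ℝ H] [FiniteDimensional ℝ H]

theorem IsNakanoMetric.integral {g : (Fin n → ℝ) × E → H →L[ℝ] H} (hg : IsNakanoMetric g)
    (hint : ∀ x, Integrable fun y ↦ g (y, x)) (hsmooth : ContDiff ℝ 2 fun x ↦ ∫ y, g (y, x)) :
    IsNakanoMetric fun x ↦ ∫ y, g (y, x) := by
  have : ProperSpace E := FiniteDimensional.proper ℝ E
  refine isNakanoMetric_of_monotone_of_tendsto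
    (G := fun (R : ℕ) x ↦ ∫ y in Icc (fun _ ↦ -((R : ℝ) + 1)) fun _ ↦ (R : ℝ) + 1, g (y, x))
    (fun R ↦ hg.setIntegral_Icc fun _ ↦ neg_lt_self (by positivity)) (fun x R R' h ↦ ?_)
    (fun x ↦ ?_) hsmooth
  · exact setIntegral_mono_set (hint x).integrableOn
      (.of_forall fun y ↦ (hg.isStrictlyPositive (y, x)).nonneg)
      (monotone_Icc_neg_natCast_add_one h).eventuallyLE
  · simpa only [iUnion_Icc_neg_natCast_add_one, Measure.restrict_univ] using
      tendsto_setIntegral_of_monotone (fun _ ↦ measurableSet_Icc) monotone_Icc_neg_natCast_add_one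
        (hint x).integrableOn

end FiberIntegral

section RealEuclideanCLM

variable {n : Type*} [Fintype n]

lemma real_inner_eq_re_inner_complex (u v : EuclideanSpace ℂ n) : ⟪u, v⟫ = (inner ℂ u v).re := by
  simp [PiLp.inner_apply]

variable [DecidableEq n] {M : Matrix n n ℂ}

/-- A complex matrix, as a real-linear operator on the Euclidean space of complex vectors. It
reduces hermitian metrics to operator-valued ones over the reals. -/
noncomputable def toRealEuclideanCLM :
    Matrix n n ℂ →⋆ₐ[ℝ] (EuclideanSpace ℂ n →L[ℝ] EuclideanSpace ℂ n) where
  toFun M := (toEuclideanCLM (𝕜 := ℂ) M).restrictScalars ℝ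
  map_one' := by rw [map_one]; rfl
  map_mul' M N := by rw [map_mul]; rfl
  map_zero' := by rw [map_zero]; rfl
  map_add' M N := by rw [map_add]; rfl
  commutes' c := by
    ext u
    simp [Algebra.algebraMap_eq_smul_one, smul_mulVec]
  map_star' M := by
    refine (ContinuousLinearMap.eq_adjoint_iff _ _).2 fun u v ↦ ?_
    simp only [real_inner_eq_re_inner_complex, map_star, ContinuousLinearMap.star_eq_adjoint,
      ContinuousLinearMap.coe_restrictScalars', ContinuousLinearMap.adjoint_inner_left]

lemma toRealEuclideanCLM_apply (M : Matrix n n ℂ) (u : EuclideanSpace ℂ n) :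
    toRealEuclideanCLM M u = WithLp.toLp 2 (M *ᵥ u) := rfl

lemma toRealEuclideanCLM_injective :
    Function.Injective (toRealEuclideanCLM : Matrix n n ℂ → _) := fun _ _ h ↦
  toEuclideanCLM.injective (ContinuousLinearMap.ext fun u ↦ congrArg (· u) h)

lemma inner_toRealEuclideanCLM_apply (M : Matrix n n ℂ) (u v : EuclideanSpace ℂ n) :
    ⟪toRealEuclideanCLM M u, v⟫ = (star ⇑v ⬝ᵥ M *ᵥ u).re := by
  rw [real_inner_comm, real_inner_eq_re_inner_complex, EuclideanSpace.inner_eq_star_dotProduct,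
    dotProduct_comm, toRealEuclideanCLM_apply]

lemma isSelfAdjoint_toRealEuclideanCLM_iff :
    IsSelfAdjoint (toRealEuclideanCLM M) ↔ M.IsHermitian := by
  rw [IsSelfAdjoint, ← map_star, toRealEuclideanCLM_injective.eq_iff]
  rfl

lemma isStrictlyPositive_toRealEuclideanCLM_iff :
    IsStrictlyPositive (toRealEuclideanCLM M) ↔ M.PosDef := by
  refine ⟨fun h ↦ ?_, fun h ↦ isStrictlyPositive_of_inner_pos ?_ fun u hu ↦ ?_⟩
  · have hM : M.IsHermitian := isSelfAdjoint_toRealEuclideanCLM_iff.1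
      ((ContinuousLinearMap.nonneg_iff_isPositive _).1 h.nonneg).isSelfAdjoint
    refine .of_dotProduct_mulVec_pos hM fun u hu ↦ Complex.pos_iff.2 ⟨?_, ?_⟩
    · rw [← inner_toRealEuclideanCLM_apply M (WithLp.toLp 2 u)]
      exact inner_pos_of_isStrictlyPositive h (by simpa using hu)
    · exact (hM.im_star_dotProduct_mulVec_self u).symm
  · exact ContinuousLinearMap.isSelfAdjoint_iff_isSymmetric.1
      (isSelfAdjoint_toRealEuclideanCLM_iff.2 h.isHermitian)
  · rw [inner_toRealEuclideanCLM_apply]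
    exact h.re_dotProduct_pos (by simpa using hu)

end RealEuclideanCLM

section MatrixMetric

open scoped Matrix.Norms.Elementwise

section Calculus

variable {E : Type*} [NormedAddCommGroup E] [NormedSpace ℝ E] {n : Type*} [Fintype n]
  {g : E → Matrix n n ℂ}

lemma contDiff_matrix_iff {k : WithTop ℕ∞} :
    ContDiff ℝ k g ↔ ∀ a b, ContDiff ℝ k fun x ↦ g x a b :=
  contDiff_pi.trans (forall_congr' fun _ ↦ contDiff_pi)

variable [DecidableEq n]

lemma toRealEuclideanCLM_inv {M : Matrix n n ℂ} (hM : IsUnit M) :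
    toRealEuclideanCLM M⁻¹ = (toRealEuclideanCLM M)⁻¹ʳ := by
  obtain ⟨U, rfl⟩ := hM
  rw [← coe_units_inv]
  exact (Ring.inverse_unit (Units.map (MonoidHomClass.toMonoidHom toRealEuclideanCLM) U)).symm

lemma contDiff_toRealEuclideanCLM_comp_iff {k : WithTop ℕ∞} :
    ContDiff ℝ k (fun x ↦ toRealEuclideanCLM (g x)) ↔ ContDiff ℝ k g := by
  refine ⟨fun h ↦ ?_, fun h ↦ ?_⟩
  · obtain ⟨L, hL⟩ := LinearMap.exists_leftInverse_of_injective
      (toRealEuclideanCLM : Matrix n n ℂ →⋆ₐ[ℝ] _).toAlgHom.toLinearMap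
      (LinearMap.ker_eq_bot.2 toRealEuclideanCLM_injective)
    have hLg : (fun x ↦ L (toRealEuclideanCLM (g x))) = g := funext fun x ↦ LinearMap.congr_fun hL _
    exact hLg ▸ L.toContinuousLinearMap.contDiff.comp h
  · exact (toRealEuclideanCLM : Matrix n n ℂ →⋆ₐ[ℝ]
      _).toAlgHom.toLinearMap.toContinuousLinearMap.contDiff.comp h

end Calculus

variable {ι : Type*} [DecidableEq ι] {r : ℕ} {g : (ι → ℝ) → Matrix (Fin r) (Fin r) ℂ}

lemma mpd_eq_fderiv_apply [Finite ι] (hg : Differentiable ℝ g) (j : ι) (x : ι → ℝ) :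
    mpd j g x = fderiv ℝ g x (Pi.single j 1) := by
  cases nonempty_fintype ι
  ext a b
  exact fderiv_clm_comp_apply (entryLinearMap ℝ ℂ a b).toContinuousLinearMap hg x _

lemma toRealEuclideanCLM_mpd [Finite ι] (hg : Differentiable ℝ g) (j : ι) (x : ι → ℝ) :
    toRealEuclideanCLM (mpd j g x) =
      fderiv ℝ (fun y ↦ toRealEuclideanCLM (g y)) x (Pi.single j 1) := by
  cases nonempty_fintype ι
  rw [mpd_eq_fderiv_apply hg]
  exact (fderiv_clm_comp_apply (toRealEuclideanCLM : Matrix (Fin r) (Fin r) ℂ →⋆ₐ[ℝ]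
    _).toAlgHom.toLinearMap.toContinuousLinearMap hg x _).symm

variable [Fintype ι]

lemma toRealEuclideanCLM_mul_Theta (hg : ContDiff ℝ 2 g) (hu : ∀ x, IsUnit (g x)) (j k : ι)
    (x : ι → ℝ) :
    toRealEuclideanCLM (g x * Theta g j k x) =
      curvature (fun y ↦ toRealEuclideanCLM (g y)) x (Pi.single j 1) (Pi.single k 1) := by
  set G := fun y ↦ toRealEuclideanCLM (g y)
  have hG : ContDiff ℝ 2 G := contDiff_toRealEuclideanCLM_comp_iff.2 hg
  have hGu y : IsUnit (G y) := (hu y).map toRealEuclideanCLM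
  have hconn : (fun y ↦ toRealEuclideanCLM ((g y)⁻¹ * mpd j g y)) =
      fun y ↦ (G y)⁻¹ʳ * fderiv ℝ G y (Pi.single j 1) := by
    funext y
    rw [map_mul, toRealEuclideanCLM_inv (hu y),
      toRealEuclideanCLM_mpd (hg.differentiable two_ne_zero)]
  have hdiff : ContDiff ℝ 1 fun y ↦ (g y)⁻¹ * mpd j g y := by
    rw [← contDiff_toRealEuclideanCLM_comp_iff, hconn]
    exact ((contDiff_inverse hG hGu).of_le one_le_two).mul
      ((hG.fderiv_right (by norm_num)).clm_apply contDiff_const)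
  rw [map_mul, Theta, toRealEuclideanCLM_mpd (hdiff.differentiable one_ne_zero), hconn,
    mul_fderiv_inverse_mul_fderiv hG hGu]

lemma conjTranspose_mul_Theta (hg : ContDiff ℝ 2 g) (hpos : ∀ x, (g x).PosDef) (j k : ι)
    (x : ι → ℝ) : (g x * Theta g j k x)ᴴ = g x * Theta g k j x := by
  have hu y : IsUnit (g y) := (hpos y).isUnit
  rw [← toRealEuclideanCLM_injective.eq_iff, ← star_eq_conjTranspose, map_star,
    toRealEuclideanCLM_mul_Theta hg hu, toRealEuclideanCLM_mul_Theta hg hu,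
    star_curvature (contDiff_toRealEuclideanCLM_comp_iff.2 hg) fun y ↦
      isSelfAdjoint_toRealEuclideanCLM_iff.2 (hpos y).isHermitian]

lemma ip_mulVec (M N : Matrix (Fin r) (Fin r) ℂ) (u v : Fin r → ℂ) :
    ip M (N *ᵥ u) v = star v ⬝ᵥ (M * N) *ᵥ u := by
  rw [ip, mulVec_mulVec]

lemma star_ip_Theta (hg : ContDiff ℝ 2 g) (hpos : ∀ x, (g x).PosDef) (j k : ι) (x : ι → ℝ)
    (u v : Fin r → ℂ) :
    star (ip (g x) (Theta g j k x *ᵥ u) v) = ip (g x) (Theta g k j x *ᵥ v) u := by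
  rw [ip_mulVec, ip_mulVec, ← star_dotProduct, star_mulVec, ← dotProduct_mulVec,
    conjTranspose_mul_Theta hg hpos]

lemma im_sum_ip_Theta (hg : ContDiff ℝ 2 g) (hpos : ∀ x, (g x).PosDef) (x : ι → ℝ)
    (u : ι → Fin r → ℂ) : (∑ j, ∑ k, ip (g x) (Theta g j k x *ᵥ u j) (u k)).im = 0 := by
  rw [← Complex.conj_eq_iff_im]
  simp only [map_sum, starRingEnd_apply, star_ip_Theta hg hpos]
  exact Finset.sum_comm

lemma re_sum_ip_Theta (hg : ContDiff ℝ 2 g) (hpos : ∀ x, (g x).PosDef) (x : ι → ℝ)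
    (u : ι → Fin r → ℂ) :
    (∑ j, ∑ k, ip (g x) (Theta g j k x *ᵥ u j) (u k)).re =
      ∑ j, ∑ k, ⟪curvature (fun y ↦ toRealEuclideanCLM (g y)) x (Pi.single j 1) (Pi.single k 1)
        (WithLp.toLp 2 (u j)), WithLp.toLp 2 (u k)⟫ := by
  simp only [← toRealEuclideanCLM_mul_Theta hg fun y ↦ (hpos y).isUnit,
    inner_toRealEuclideanCLM_apply, ip_mulVec, Complex.re_sum]

lemma nakanoLogConcave_iff_secondVariation_le (hg : ContDiff ℝ 2 g) (hpos : ∀ x, (g x).PosDef) :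
    NakanoLogConcave g ↔ ∀ x (u : ι → EuclideanSpace ℂ (Fin r)),
      let G := fun y ↦ toRealEuclideanCLM (g y)
      let e := fun j ↦ Pi.single j (1 : ℝ)
      secondVariation G x e u ≤ ⟪(G x)⁻¹ʳ (firstVariation G x e u), firstVariation G x e u⟫ := by
  have hsa x : IsSelfAdjoint (toRealEuclideanCLM (g x)) :=
    isSelfAdjoint_toRealEuclideanCLM_iff.2 (hpos x).isHermitian
  refine forall_congr' fun x ↦
    (Equiv.piCongrRight fun _ ↦ WithLp.equiv 2 (Fin r → ℂ)).symm.forall_congr fun u ↦ ?_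
  rw [Complex.nonpos_iff, and_iff_left (im_sum_ip_Theta hg hpos x u), re_sum_ip_Theta hg hpos,
    sum_inner_curvature hsa x (fun j ↦ Pi.single j 1) fun j ↦ WithLp.toLp 2 (u j), sub_nonpos]
  rfl

theorem isMetric_and_nakanoLogConcave_iff {ι : Type} [Fintype ι] [DecidableEq ι]
    {g : (ι → ℝ) → Matrix (Fin r) (Fin r) ℂ} :
    IsMetric g ∧ NakanoLogConcave g ↔ IsNakanoMetric fun x ↦ toRealEuclideanCLM (g x) := by
  refine ⟨fun ⟨⟨hpos, hg⟩, hnak⟩ ↦ ?_, fun h ↦ ?_⟩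
  · rw [← contDiff_matrix_iff] at hg
    refine isNakanoMetric_of_basis (Pi.basisFun ℝ ι) (contDiff_toRealEuclideanCLM_comp_iff.2 hg)
      (fun x ↦ isStrictlyPositive_toRealEuclideanCLM_iff.2 (hpos x)) fun x u ↦ ?_
    rw [funext (Pi.basisFun_apply ℝ ι)]
    exact (nakanoLogConcave_iff_secondVariation_le hg hpos).1 hnak x u
  · have hg : ContDiff ℝ 2 g := contDiff_toRealEuclideanCLM_comp_iff.1 h.contDiff
    have hpos x : (g x).PosDef :=
      isStrictlyPositive_toRealEuclideanCLM_iff.1 (h.isStrictlyPositive x)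
    exact ⟨⟨hpos, contDiff_matrix_iff.1 hg⟩,
      (nakanoLogConcave_iff_secondVariation_le hg hpos).2 fun x ↦ h.secondVariation_le x _⟩

end MatrixMetric

section Integral

variable {X n : Type*} [MeasurableSpace X] {μ : Measure X} [Fintype n] [DecidableEq n]
  {g : X → Matrix n n ℂ}

/-- `toRealEuclideanCLM` as a continuous linear map on arrays of entries, which carry a canonical
norm, as integration requires, whereas matrices do not. -/
noncomputable def entriesToRealEuclideanCLM :
    (n → n → ℂ) →L[ℝ] (EuclideanSpace ℂ n →L[ℝ] EuclideanSpace ℂ n) :=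
  LinearMap.toContinuousLinearMap
    ((toRealEuclideanCLM : Matrix n n ℂ →⋆ₐ[ℝ] _).toAlgHom.toLinearMap ∘ₗ
      (ofLinearEquiv ℝ).toLinearMap)

lemma integrable_toRealEuclideanCLM (hg : ∀ a b, Integrable (fun x ↦ g x a b) μ) :
    Integrable (fun x ↦ toRealEuclideanCLM (g x)) μ :=
  entriesToRealEuclideanCLM.integrable_comp (φ := fun x a b ↦ g x a b)
    (.of_eval fun a ↦ .of_eval (hg a))

lemma toRealEuclideanCLM_of_integral (hg : ∀ a b, Integrable (fun x ↦ g x a b) μ) :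
    toRealEuclideanCLM (of fun a b ↦ ∫ x, g x a b ∂μ) = ∫ x, toRealEuclideanCLM (g x) ∂μ := by
  have hrow a : Integrable (fun x b ↦ g x a b) μ := .of_eval (hg a)
  have hentry : (fun a b ↦ ∫ x, g x a b ∂μ) = ∫ x, (fun a b ↦ g x a b) ∂μ := by
    ext a b
    rw [eval_integral hrow, eval_integral (hg a)]
  have hcomm := entriesToRealEuclideanCLM.integral_comp_comm (.of_eval hrow)
  rw [← hentry] at hcomm
  exact hcomm.symm

end Integral

theorem statement19 {n m r : ℕ}
    (g : ((Fin n ⊕ Fin m) → ℝ) → Matrix (Fin r) (Fin r) ℂ)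
    (hg : IsMetric g) (hnak : NakanoLogConcave g)
    (hint : ∀ (t : Fin m → ℝ) (a b : Fin r),
      Integrable fun y : Fin n → ℝ => g (Sum.elim y t) a b)
    (hC2 : ∀ a b : Fin r, ContDiff ℝ 2 fun t : Fin m → ℝ => fiberInt g t a b) :
    IsMetric (fiberInt g) ∧ NakanoLogConcave (fiberInt g) := by
  let A : (Fin n → ℝ) × (Fin m → ℝ) →L[ℝ] (Fin n ⊕ Fin m → ℝ) :=
    ((ContinuousLinearEquiv.sumPiEquivProdPi ℝ (Fin n) (Fin m) fun _ ↦ ℝ).symm : _ →L[ℝ] _)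
  have hA y t : A (y, t) = Sum.elim y t := by ext (i | i) <;> rfl
  have hG := (isMetric_and_nakanoLogConcave_iff.1 ⟨hg, hnak⟩).comp_affine A.toContinuousAffineMap
  have hGint t : Integrable fun y ↦ toRealEuclideanCLM (g (A (y, t))) :=
    integrable_toRealEuclideanCLM fun a b ↦ by simpa only [hA] using hint t a b
  have hfiber : (fun t ↦ toRealEuclideanCLM (fiberInt g t)) =
      fun t ↦ ∫ y, toRealEuclideanCLM (g (A (y, t))) :=
    funext fun t ↦ (toRealEuclideanCLM_of_integral (hint t)).trans (by simp only [hA])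
  have hsmooth : ContDiff ℝ 2 fun t ↦ toRealEuclideanCLM (fiberInt g t) :=
    contDiff_toRealEuclideanCLM_comp_iff.2 (contDiff_matrix_iff.2 hC2)
  rw [isMetric_and_nakanoLogConcave_iff, hfiber]
  exact hG.integral hGint (hfiber ▸ hsmooth)
end
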